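/- arXiv:2102.11966 — 5 statements merged into one kernel-verified Lean document; each statement's English description precedes it below -/
import Mathlib

section
/- Let n ≥ 1 and let μ, μ̃ be partitions of n. Then (1/n!) · Σ_{π ∈ S_n} d_μ(π) · d_μ̃(π) = N_{μ,μ̃}, where the sum is over all permutations π of {1,…,n}. -/
/-- `dPart μ π` is the number of ordered tuples `(A_1, …, A_m)` of pairwise disjoint
subsets of `{0, …, n-1}` with union everything, `|A_i| = μ_i`, and each `A_i`
invariant under the permutation `π`. -/
noncomputable def dPart {n m : ℕ} (μ : Fin m → ℕ) (π : Equiv.Perm (Fin n)) : ℕ :=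
  Nat.card {A : Fin m → Finset (Fin n) //
    (∀ i j, i ≠ j → Disjoint (A i) (A j)) ∧
    (Finset.univ.biUnion A = Finset.univ) ∧
    (∀ i, (A i).card = μ i) ∧
    (∀ i, (A i).image π = A i)}

/-- `Nmat μ ν` is the number of `m × l` matrices of non-negative integers whose
`i`-th row sums to `μ i` and whose `j`-th column sums to `ν j`. -/
noncomputable def Nmat {m l : ℕ} (μ : Fin m → ℕ) (ν : Fin l → ℕ) : ℕ :=
  Nat.card {M : Fin m → Fin l → ℕ //
    (∀ i, ∑ j, M i j = μ i) ∧ (∀ j, ∑ i, M i j = ν j)}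

/-- Colourings with given colour class sizes that are fixed by a permutation. -/
lemma dPart_eq_card_fixed {n m : ℕ} (μ : Fin m → ℕ) (π : Equiv.Perm (Fin n)) :
    dPart μ π = Nat.card {f : Fin n → Fin m //
      (∀ i, (Finset.univ.filter (fun x => f x = i)).card = μ i) ∧ ∀ x, f (π x) = f x} := by
  symm
  unfold dPart
  refine Nat.card_congr (Equiv.ofBijective (fun f => ⟨fun i => Finset.univ.filter (fun x => f.1 x = i),
    ?_, ?_, f.2.1, ?_⟩) ⟨?_, ?_⟩)
  · intro i j hij
    rw [Finset.disjoint_left]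
    intro x hx hy
    simp only [Finset.mem_filter, Finset.mem_univ, true_and] at hx hy
    exact hij (hx.symm.trans hy)
  · ext x; simp
  · intro i
    ext x
    simp only [Finset.mem_image, Finset.mem_filter, Finset.mem_univ, true_and]
    constructor
    · rintro ⟨y, hy, rfl⟩
      rw [f.2.2, hy]
    · intro hx
      refine ⟨π.symm x, ?_, by simp⟩
      rw [← f.2.2, Equiv.apply_symm_apply, hx]
  · intro f g h
    apply Subtype.ext
    funext x
    have h1 := congrFun (congrArg Subtype.val h) (f.1 x)
    have h2 : x ∈ Finset.univ.filter (fun y => f.1 y = f.1 x) := by simp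
    simp only at h1
    rw [h1] at h2
    simpa using (by simpa using h2 : g.1 x = f.1 x).symm
  · rintro ⟨A, hd, hu, hc, hi⟩
    have hex : ∀ x, ∃ i, x ∈ A i := by
      intro x
      have : x ∈ Finset.univ.biUnion A := by rw [hu]; simp
      simpa using this
    choose f hf using hex
    have huniq : ∀ x i, x ∈ A i ↔ f x = i := by
      intro x i
      constructor
      · intro hx
        by_contra hne
        exact Finset.disjoint_left.1 (hd _ _ hne) (hf x) hx
      · rintro rfl
        exact hf x
    have hA : ∀ i, Finset.univ.filter (fun x => f x = i) = A i := by
      intro i; ext x; simp [huniq]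
    refine ⟨⟨f, fun i => by rw [hA, hc], fun x => ?_⟩, ?_⟩
    · rw [← huniq, ← hi]
      exact Finset.mem_image_of_mem _ (hf x)
    · apply Subtype.ext
      funext i
      exact hA i

/-- Pairs of colourings with prescribed colour class sizes. -/
def ColPair (n : ℕ) {m l : ℕ} (μ : Fin m → ℕ) (ν : Fin l → ℕ) : Type :=
  {f : Fin n → Fin m × Fin l //
    (∀ i, (Finset.univ.filter (fun x => (f x).1 = i)).card = μ i) ∧
    (∀ j, (Finset.univ.filter (fun x => (f x).2 = j)).card = ν j)}

instance (n : ℕ) {m l : ℕ} (μ : Fin m → ℕ) (ν : Fin l → ℕ) : Finite (ColPair n μ ν) := by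
  unfold ColPair; infer_instance

lemma card_filter_perm {n : ℕ} (σ : Equiv.Perm (Fin n)) (p : Fin n → Prop) [DecidablePred p] :
    (Finset.univ.filter (fun x => p (σ x))).card = (Finset.univ.filter p).card := by
  refine Finset.card_bij (fun x _ => σ x) ?_ ?_ ?_
  · intro x hx; simpa using hx
  · intro x _ y _ h; exact σ.injective h
  · intro y hy; exact ⟨σ.symm y, by simpa using hy, by simp⟩

instance colAction (n : ℕ) {m l : ℕ} (μ : Fin m → ℕ) (ν : Fin l → ℕ) :
    MulAction (Equiv.Perm (Fin n)) (ColPair n μ ν) where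
  smul σ f := ⟨fun x => f.1 (σ⁻¹ x), fun i => by
    rw [card_filter_perm σ⁻¹ (fun x => (f.1 x).1 = i), f.2.1], fun j => by
    rw [card_filter_perm σ⁻¹ (fun x => (f.1 x).2 = j), f.2.2]⟩
  one_smul f := Subtype.ext (funext fun x => rfl)
  mul_smul σ τ f := Subtype.ext (funext fun x => by
    change f.1 ((σ * τ)⁻¹ x) = f.1 (τ⁻¹ (σ⁻¹ x))
    rw [mul_inv_rev]; rfl)

lemma colAction_val {n m l : ℕ} {μ : Fin m → ℕ} {ν : Fin l → ℕ} (σ : Equiv.Perm (Fin n))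
    (f : ColPair n μ ν) (x : Fin n) : (σ • f).1 x = f.1 (σ⁻¹ x) := rfl

lemma mem_fixed_iff {n m l : ℕ} {μ : Fin m → ℕ} {ν : Fin l → ℕ} (π : Equiv.Perm (Fin n))
    (f : ColPair n μ ν) :
    f ∈ MulAction.fixedBy (ColPair n μ ν) π ↔ ∀ x, f.1 (π x) = f.1 x := by
  rw [MulAction.mem_fixedBy]
  constructor
  · intro h x
    have h1 : (π • f).1 (π x) = f.1 (π x) := by rw [h]
    have h2 : f.1 (π⁻¹ (π x)) = f.1 (π x) := h1
    rw [show π⁻¹ (π x) = x from π.symm_apply_apply x] at h2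
    exact h2.symm
  · intro h
    apply Subtype.ext
    funext x
    have h1 := h (π⁻¹ x)
    rw [show π (π⁻¹ x) = x from π.apply_symm_apply x] at h1
    exact h1.symm

lemma dPart_mul_eq {n m l : ℕ} (μ : Fin m → ℕ) (ν : Fin l → ℕ) (π : Equiv.Perm (Fin n)) :
    dPart μ π * dPart ν π = Nat.card (MulAction.fixedBy (ColPair n μ ν) π) := by
  rw [dPart_eq_card_fixed, dPart_eq_card_fixed, ← Nat.card_prod]
  exact Nat.card_congr ⟨fun p => ⟨⟨fun x => (p.1.1 x, p.2.1 x), p.1.2.1, p.2.2.1⟩,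
      (mem_fixed_iff π _).2 fun x => Prod.ext (p.1.2.2 x) (p.2.2.2 x)⟩,
    fun f => (⟨fun x => (f.1.1 x).1, f.1.2.1,
        fun x => congrArg Prod.fst ((mem_fixed_iff π f.1).1 f.2 x)⟩,
      ⟨fun x => (f.1.1 x).2, f.1.2.2,
        fun x => congrArg Prod.snd ((mem_fixed_iff π f.1).1 f.2 x)⟩),
    fun _ => rfl, fun _ => rfl⟩

/-- The matrix of joint colour class sizes. -/
def colMat {n m l : ℕ} (f : Fin n → Fin m × Fin l) (i : Fin m) (j : Fin l) : ℕ :=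
  (Finset.univ.filter (fun x => f x = (i, j))).card

lemma colMat_row {n m l : ℕ} (f : Fin n → Fin m × Fin l) (i : Fin m) :
    ∑ j, colMat f i j = (Finset.univ.filter (fun x => (f x).1 = i)).card := by
  rw [Finset.card_eq_sum_card_fiberwise (f := fun x => (f x).2) (t := Finset.univ)
    (fun _ _ => by simp)]
  refine Finset.sum_congr rfl fun j _ => ?_
  unfold colMat
  rw [Finset.filter_filter]
  simp only [Prod.ext_iff]

lemma colMat_col {n m l : ℕ} (f : Fin n → Fin m × Fin l) (j : Fin l) :
    ∑ i, colMat f i j = (Finset.univ.filter (fun x => (f x).2 = j)).card := by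
  rw [Finset.card_eq_sum_card_fiberwise (f := fun x => (f x).1) (t := Finset.univ)
    (fun _ _ => by simp)]
  refine Finset.sum_congr rfl fun i _ => ?_
  unfold colMat
  rw [Finset.filter_filter]
  simp only [Prod.ext_iff, and_comm]

lemma exists_perm_of_colMat {n m l : ℕ} (f g : Fin n → Fin m × Fin l)
    (h : colMat f = colMat g) : ∃ σ : Equiv.Perm (Fin n), ∀ x, g (σ x) = f x := by
  have e : ∀ c, Nonempty ({x // f x = c} ≃ {x // g x = c}) := by
    intro c
    refine ⟨Fintype.equivOfCardEq ?_⟩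
    rw [Fintype.card_subtype, Fintype.card_subtype]
    exact congrFun (congrFun h c.1) c.2
  replace e := fun c => (e c).some
  refine ⟨(Equiv.sigmaFiberEquiv f).symm.trans
    ((Equiv.sigmaCongrRight e).trans (Equiv.sigmaFiberEquiv g)), fun x => ?_⟩
  exact (e (f x) ⟨x, rfl⟩).2

lemma exists_colMat {n m l : ℕ} (M : Fin m → Fin l → ℕ) (hM : ∑ i, ∑ j, M i j = n) :
    ∃ f : Fin n → Fin m × Fin l, colMat f = M := by
  have hc : Fintype.card (Fin n) = Fintype.card (Σ c : Fin m × Fin l, Fin (M c.1 c.2)) := by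
    simp [Fintype.sum_prod_type, hM]
  let e := Fintype.equivOfCardEq hc
  refine ⟨fun x => (e x).1, ?_⟩
  funext i j
  unfold colMat
  rw [← Fintype.card_subtype]
  have e1 : {x // (e x).1 = (i, j)} ≃
      {y : Σ c : Fin m × Fin l, Fin (M c.1 c.2) // y.1 = (i, j)} :=
    e.subtypeEquiv (fun _ => Iff.rfl)
  rw [Fintype.card_congr (e1.trans (Equiv.sigmaSubtype (i, j)))]
  simp

lemma card_orbits {n m l : ℕ} (μ : Fin m → ℕ) (ν : Fin l → ℕ) (hμs : ∑ i, μ i = n) :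
    Nat.card (Quotient (MulAction.orbitRel (Equiv.Perm (Fin n)) (ColPair n μ ν)))
      = Nmat μ ν := by
  unfold Nmat
  refine Nat.card_congr (Equiv.ofBijective (Quotient.lift (fun f => ⟨colMat f.1,
    fun i => by rw [colMat_row, f.2.1], fun j => by rw [colMat_col, f.2.2]⟩) ?_) ⟨?_, ?_⟩)
  · rintro f g ⟨σ, rfl⟩
    apply Subtype.ext
    funext i j
    exact card_filter_perm σ⁻¹ (fun x => g.1 x = (i, j))
  · intro a b
    refine Quotient.inductionOn₂ a b fun f g h => ?_
    obtain ⟨σ, hσ⟩ := exists_perm_of_colMat f.1 g.1 (congrArg Subtype.val h)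
    refine Quotient.sound ⟨σ⁻¹, ?_⟩
    apply Subtype.ext
    funext x
    change (σ⁻¹ • g).1 x = f.1 x
    rw [colAction_val, inv_inv, hσ]
  · rintro ⟨M, hr, hc⟩
    obtain ⟨f, hf⟩ := exists_colMat (n := n) M (by simp only [hr, hμs])
    refine ⟨Quotient.mk _ ⟨f, fun i => ?_, fun j => ?_⟩, ?_⟩
    · rw [← colMat_row, hf, hr]
    · rw [← colMat_col, hf, hc]
    · exact Subtype.ext hf

/-- For partitions `μ, ν ⊢ n`, the average of `d_μ(π) d_ν(π)` over `S_n`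
equals the number of non-negative integer matrices with row sums `μ` and
column sums `ν`. -/
theorem average_dPart_mul_dPart (n : ℕ) (hn : 1 ≤ n) (m l : ℕ)
    (μ : Fin m → ℕ) (ν : Fin l → ℕ)
    (hμa : Antitone μ) (hμp : ∀ i, 0 < μ i) (hμs : ∑ i, μ i = n)
    (hνa : Antitone ν) (hνp : ∀ j, 0 < ν j) (hνs : ∑ j, ν j = n) :
    (1 / (Nat.factorial n : ℚ)) *
      ∑ π : Equiv.Perm (Fin n), (dPart μ π : ℚ) * (dPart ν π : ℚ)
      = (Nmat μ ν : ℚ) := by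
  classical
  have hfin : Fintype (ColPair n μ ν) := Fintype.ofFinite _
  have hB := MulAction.sum_card_fixedBy_eq_card_orbits_mul_card_group
    (Equiv.Perm (Fin n)) (ColPair n μ ν)
  have hs : ∑ π : Equiv.Perm (Fin n), dPart μ π * dPart ν π = Nmat μ ν * n.factorial := by
    rw [← card_orbits μ ν hμs]
    simp only [dPart_mul_eq, Nat.card_eq_fintype_card]
    rw [hB, Fintype.card_perm, Fintype.card_fin]
  have hq : ∑ π : Equiv.Perm (Fin n), (dPart μ π : ℚ) * (dPart ν π : ℚ)
      = (Nmat μ ν : ℚ) * n.factorial := by exact_mod_cast hs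
  rw [hq]
  have : (n.factorial : ℚ) ≠ 0 := by exact_mod_cast n.factorial_ne_zero
  field_simp
end

section
/- For every m ≥ 1 and every number of variables N ≥ 1, one has Σ_{π ∈ S_m} p_{λ(π)} = m! · h_m, as an identity of symmetric polynomials in N variables with rational coefficients. -/
/-- `pPerm N π = p_{λ(π)}`, the product of the power sum polynomials `p_k` in `N`
variables over the cycle lengths `k` (including fixed points) of the permutation `π`. -/
noncomputable def pPerm (N : ℕ) {m : ℕ} (π : Equiv.Perm (Fin m)) :
    MvPolynomial (Fin N) ℚ :=
  ((Equiv.Perm.partition π).parts.map (fun k => MvPolynomial.psum (Fin N) ℚ k)).prod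

open Equiv.Perm in
lemma prod_parts_eq {α M : Type*} [Fintype α] [DecidableEq α] [CommMonoid M]
    (σ : Equiv.Perm α) (ψ : ℕ → M) [Fintype (Quotient (SameCycle.setoid σ))]
    [DecidableEq (Quotient (SameCycle.setoid σ))] :
    ((σ.partition).parts.map ψ).prod
      = ∏ c : Quotient (SameCycle.setoid σ),
        ψ (Finset.card {a : α | (Quotient.mk (SameCycle.setoid σ) a) = c}) := by
  classical
  have hmk : ∀ a b : α, Quotient.mk (SameCycle.setoid σ) a = Quotient.mk (SameCycle.setoid σ) b
      ↔ SameCycle σ a b := fun a b => Quotient.eq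
  have hout : ∀ (a : α) (c : Quotient (SameCycle.setoid σ)),
      Quotient.mk (SameCycle.setoid σ) a = c ↔ SameCycle σ a c.out := by
    intro a c
    rw [← hmk, Quotient.out_eq]
  rw [parts_partition, Multiset.map_add, Multiset.prod_add, cycleType_def, Multiset.map_map,
    ← Finset.prod_filter_mul_prod_filter_not Finset.univ
      (fun c : Quotient (SameCycle.setoid σ) => c.out ∈ σ.support)]
  congr 1
  · symm
    change _ = ∏ τ ∈ σ.cycleFactorsFinset, ψ (τ.support.card)
    refine Finset.prod_bij (fun c _ => σ.cycleOf c.out) ?_ ?_ ?_ ?_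
    · intro c hc
      simpa [cycleOf_mem_cycleFactorsFinset_iff] using hc
    · intro c hc d hd h
      simp only [Finset.mem_filter, Finset.mem_univ, true_and] at hc hd
      rw [← Quotient.out_eq c, hout]
      have : c.out ∈ (σ.cycleOf d.out).support := by
        rw [← h, mem_support_cycleOf_iff]
        exact ⟨SameCycle.refl _ _, hc⟩
      rw [mem_support_cycleOf_iff] at this
      exact this.1.symm
    · intro τ hτ
      obtain ⟨a, ha⟩ := (mem_cycleFactorsFinset_iff.1 hτ).1.nonempty_support
      have h1 := cycle_is_cycleOf ha hτ
      have h2 : SameCycle σ a (Quotient.mk (SameCycle.setoid σ) a).out := (hout a _).1 rfl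
      refine ⟨Quotient.mk _ a, ?_, ?_⟩
      · simp only [Finset.mem_filter, Finset.mem_univ, true_and]
        rw [← h2.mem_support_iff]
        exact mem_cycleFactorsFinset_support_le hτ ha
      · rw [h1]
        exact h2.symm.cycleOf_eq
    · intro c hc
      simp only [Finset.mem_filter, Finset.mem_univ, true_and] at hc
      congr 2
      ext a
      rw [mem_support_cycleOf_iff]
      simp only [Finset.mem_filter, Finset.mem_univ, true_and, hout, hc, and_true]
      exact sameCycle_comm
  · rw [Multiset.map_replicate, Multiset.prod_replicate, ← Finset.card_compl,
      ← Finset.prod_const]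
    symm
    have key : ∀ a b : α, b ∉ σ.support → SameCycle σ a b → a = b := by
      intro a b hb h
      exact (h.symm.eq_of_left (by simpa [Function.IsFixedPt] using hb)).symm
    refine Finset.prod_bij (fun c _ => c.out) ?_ ?_ ?_ ?_
    · intro c hc
      simpa using hc
    · intro c hc d hd h
      exact Quotient.out_injective h
    · intro a ha
      have ha : a ∉ σ.support := by simpa using ha
      have h2 := key _ _ ha ((hout a _).1 rfl).symm
      refine ⟨Quotient.mk _ a, ?_, h2⟩
      simp only [Finset.mem_filter, Finset.mem_univ, true_and]
      rw [h2]; exact ha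
    · intro c hc
      simp only [Finset.mem_filter, Finset.mem_univ, true_and] at hc
      congr 1
      rw [Finset.card_eq_one]
      refine ⟨c.out, ?_⟩
      ext a
      simp only [Finset.mem_filter, Finset.mem_univ, true_and, hout, Finset.mem_singleton]
      exact ⟨key _ _ hc, fun h => h ▸ SameCycle.refl _ _⟩

open Equiv.Perm MvPolynomial in
lemma pPerm_eq (N m : ℕ) (σ : Equiv.Perm (Fin m)) :
    pPerm N σ = ∑ f : Fin m → Fin N with f ∘ σ = f, ∏ a, (X (f a) : MvPolynomial (Fin N) ℚ) := by
  classical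
  unfold pPerm
  rw [prod_parts_eq]
  simp only [psum]
  rw [Fintype.prod_sum]
  refine Finset.sum_bij (fun g _ => fun a => g (Quotient.mk _ a)) ?_ ?_ ?_ ?_
  · intro g _
    simp only [Finset.mem_filter, Finset.mem_univ, true_and]
    funext a
    simp only [Function.comp]
    congr 1
    apply Quotient.sound
    exact (sameCycle_apply_left.2 (SameCycle.refl _ _))
  · intro g _ g' _ h
    funext c
    induction c using Quotient.inductionOn with
    | h a => exact congrFun h a
  · intro f hf
    simp only [Finset.mem_filter, Finset.mem_univ, true_and] at hf
    have hs : ∀ a, f (σ a) = f a := fun a => congrFun hf a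
    have hn : ∀ (n : ℕ) a, f ((σ ^ n) a) = f a := by
      intro n
      induction n with
      | zero => simp
      | succ n ih => intro a; rw [pow_succ, Equiv.Perm.mul_apply, ih, hs]
    refine ⟨fun c => Quotient.lift f ?_ c, Finset.mem_univ _, rfl⟩
    intro a b hab
    obtain ⟨n, _, hn'⟩ := SameCycle.exists_pow_eq' (show SameCycle σ a b from hab)
    rw [← hn', hn]
  · intro g _
    rw [Finset.prod_comp (fun c => (X (g c) : MvPolynomial (Fin N) ℚ))
      (fun a => Quotient.mk (SameCycle.setoid σ) a),
      Finset.image_univ_of_surjective Quotient.mk_surjective]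

lemma exists_perm_of_map_eq {m : ℕ} {ι : Type*} (f g : Fin m → ι)
    (h : Multiset.map f Finset.univ.val = Multiset.map g Finset.univ.val) :
    ∃ τ : Equiv.Perm (Fin m), f ∘ τ = g := by
  classical
  have : ∀ i, Fintype.card {a // g a = i} = Fintype.card {a // f a = i} := by
    intro i
    have := congrArg (Multiset.count i) h
    rw [Multiset.count_map, Multiset.count_map] at this
    rw [Fintype.card_subtype, Fintype.card_subtype, Finset.card_def, Finset.card_def,
      Finset.filter_val, Finset.filter_val]
    simpa only [eq_comm] using this.symm
  let e := fun i => Fintype.equivOfCardEq (this i)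
  refine ⟨(Equiv.sigmaFiberEquiv g).symm.trans
    ((Equiv.sigmaCongrRight e).trans (Equiv.sigmaFiberEquiv f)), ?_⟩
  funext a
  exact (e (g a) ⟨a, rfl⟩).2

open MvPolynomial in
theorem sum_psum_eq_factorial_hsymm (m : ℕ) (hm : 1 ≤ m) (N : ℕ) (hN : 1 ≤ N) :
    ∑ π : Equiv.Perm (Fin m), pPerm N π
      = (Nat.factorial m : ℚ) • MvPolynomial.hsymm (Fin N) ℚ m := by
  classical
  let T : (Fin m → Fin N) → Sym (Fin N) m := fun f => ⟨Multiset.map f Finset.univ.val, by simp⟩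
  have hT : ∀ f g, T f = T g ↔ ∃ τ : Equiv.Perm (Fin m), f ∘ τ = g := by
    intro f g
    constructor
    · intro h
      exact exists_perm_of_map_eq f g (congrArg Subtype.val h)
    · rintro ⟨τ, rfl⟩
      apply Subtype.ext
      change Multiset.map f Finset.univ.val = Multiset.map (f ∘ τ) Finset.univ.val
      rw [← Multiset.map_map]
      congr 1
      exact (congrArg Finset.val (Finset.map_univ_equiv τ)).symm
  have hprod : ∀ f, ∏ a, (X (f a) : MvPolynomial (Fin N) ℚ) = ((T f).1.map X).prod := by
    intro f
    simp only [T, Multiset.map_map]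
    rfl
  have hcard : ∀ f g, T f = T g → Finset.card {π : Equiv.Perm (Fin m) | g ∘ π = g}
      = Finset.card {π : Equiv.Perm (Fin m) | f ∘ π = g} := by
    intro f g h
    obtain ⟨τ, rfl⟩ := (hT f g).1 h
    refine Finset.card_bij (fun π _ => τ * π) ?_ ?_ ?_
    · intro π hπ
      simpa [Function.comp_assoc] using hπ
    · intro π _ π' _ h
      exact mul_left_cancel h
    · intro π hπ
      refine ⟨τ⁻¹ * π, ?_, by simp⟩
      simp only [Finset.mem_filter, Finset.mem_univ, true_and] at hπ ⊢
      rw [← hπ]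
      funext a
      have := congrFun hπ a
      simp_all
  simp only [pPerm_eq, Finset.sum_filter]
  rw [Finset.sum_comm]
  simp only [← Finset.sum_filter, Finset.sum_const, hprod]
  rw [← Finset.sum_fiberwise Finset.univ T, hsymm, Finset.smul_sum]
  refine Finset.sum_congr rfl fun s _ => ?_
  obtain ⟨f, hf⟩ : ∃ f, T f = s := by
    obtain ⟨s, hs⟩ := s
    subst hs
    induction s using Quotient.inductionOn with
    | h l =>
      refine ⟨l.get, Subtype.ext ?_⟩
      change Multiset.map l.get Finset.univ.val = (l : Multiset (Fin N))
      simp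
  have h1 : ∀ g ∈ (Finset.univ.filter fun g => T g = s),
      (Finset.card {π : Equiv.Perm (Fin m) | g ∘ π = g}) •
        ((T g).1.map (X : _ → MvPolynomial (Fin N) ℚ)).prod
      = (Finset.card {π : Equiv.Perm (Fin m) | f ∘ π = g}) • (s.1.map X).prod := by
    intro g hg
    simp only [Finset.mem_filter, Finset.mem_univ, true_and] at hg
    rw [hcard f g (hf.trans hg.symm), hg]
  rw [Finset.sum_congr rfl h1, ← Finset.sum_smul,
    ← Finset.card_eq_sum_card_fiberwise (f := fun π : Equiv.Perm (Fin m) => f ∘ π)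
      (s := Finset.univ)]
  · rw [Finset.card_univ, Fintype.card_perm, Fintype.card_fin, Nat.cast_smul_eq_nsmul]
  · intro π _
    simp only [Finset.coe_filter, Finset.mem_univ, true_and, Set.mem_setOf_eq]
    rw [← hf]
    exact ((hT f _).2 ⟨π, rfl⟩).symm
end

section
/- Let n ≥ 1 and let μ, μ̃ be partitions of n. Then Σ_{λ ⊢ n} K_{λ,μ} · K_{λ,μ̃} = N_{μ,μ̃}, where the sum is over all partitions λ of n. Equivalently, the number of pairs (P, Q) of semistandard Young tableaux having the same shape (a partition of n), where P has content μ and Q has content μ̃, equals N_{μ,μ̃}. -/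
/-- `HasContent T μ` means the semistandard Young tableau `T` has content `μ`:
for each `i`, the entry `i` appears exactly `μ i` times (entries indexed from `0`). -/
def HasContent {lam : YoungDiagram} (T : SemistandardYoungTableau lam)
    {m : ℕ} (μ : Fin m → ℕ) : Prop :=
  ∀ i : Fin m, (lam.cells.filter fun c => T c.1 c.2 = (i : ℕ)).card = μ i

open scoped ENNReal

namespace RSKCount

open Classical in
/-- Indicator of a proposition, with values in the extended non-negative reals. -/
noncomputable def ind (P : Prop) : ℝ≥0∞ := if P then 1 else 0

/-- The number of elements of a type, in the extended non-negative reals. -/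
noncomputable def cnt (X : Type*) : ℝ≥0∞ := ∑' _ : X, 1

theorem cnt_congr {X Y : Type*} (e : X ≃ Y) : cnt X = cnt Y :=
  e.tsum_eq (fun _ => (1 : ℝ≥0∞))

theorem cnt_empty {X : Type*} (h : X → False) : cnt X = 0 := by
  have : IsEmpty X := ⟨h⟩
  simp [cnt]

theorem cnt_one {X : Type*} (x : X) (h : ∀ y, y = x) : cnt X = 1 := by
  have : Unique X := ⟨⟨x⟩, h⟩
  simp [cnt]

theorem cnt_sigma {A : Type*} (B : A → Type*) : cnt (Σ a, B a) = ∑' a, cnt (B a) := by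
  unfold cnt
  exact ENNReal.tsum_sigma' _

theorem cnt_prod (A B : Type*) : cnt (A × B) = cnt A * cnt B := by
  unfold cnt
  rw [ENNReal.tsum_prod', ← ENNReal.tsum_mul_right]
  simp

theorem cnt_fiber {A B : Type*} (f : A → B) : cnt A = ∑' b, cnt {a // f a = b} := by
  rw [← cnt_sigma, cnt_congr (Equiv.sigmaFiberEquiv f)]

theorem cnt_subtype {A : Type*} (p : A → Prop) : cnt {a // p a} = ∑' a, ind (p a) := by
  unfold cnt
  have := tsum_subtype {a | p a} (fun _ : A => (1 : ℝ≥0∞))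
  refine this.trans (tsum_congr fun a => ?_)
  by_cases h : p a <;> simp [ind, h]

theorem natCard_eq_of_cnt {X Y : Type*} (h : cnt X = cnt Y) : Nat.card X = Nat.card Y := by
  unfold cnt at h
  rw [ENNReal.tsum_const, ENNReal.tsum_const, mul_one, mul_one] at h
  have h2 : ENat.card X = ENat.card Y := by exact_mod_cast h
  exact congrArg ENat.toNat h2

theorem ind_and (P Q : Prop) : ind (P ∧ Q) = ind P * ind Q := by
  by_cases hP : P <;> by_cases hQ : Q <;> simp [ind, hP, hQ]

theorem ind_congr {P Q : Prop} (h : P ↔ Q) : ind P = ind Q := by rw [propext h]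

theorem ind_true {P : Prop} (h : P) : ind P = 1 := by simp [ind, h]

theorem ind_false {P : Prop} (h : ¬ P) : ind P = 0 := by simp [ind, h]

/-- Horizontal strip condition, in terms of cells. -/
def HS (ρ lam : YoungDiagram) : Prop :=
  ρ ≤ lam ∧ ∀ i j, (i + 1, j) ∈ lam → (i, j) ∈ ρ

theorem HS_iff (ρ lam : YoungDiagram) :
    HS ρ lam ↔ ∀ i, ρ.rowLen i ≤ lam.rowLen i ∧ lam.rowLen (i + 1) ≤ ρ.rowLen i := by
  constructor
  · rintro ⟨h1, h2⟩ i
    constructor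
    · by_contra! hc
      have : (i, lam.rowLen i) ∈ ρ := YoungDiagram.mem_iff_lt_rowLen.2 hc
      have := YoungDiagram.mem_iff_lt_rowLen.1 (h1 this)
      omega
    · by_contra! hc
      have := YoungDiagram.mem_iff_lt_rowLen.1 (h2 i _ (YoungDiagram.mem_iff_lt_rowLen.2 hc))
      omega
  · intro h
    constructor
    · rintro ⟨i, j⟩ hij
      exact YoungDiagram.mem_iff_lt_rowLen.2
        (lt_of_lt_of_le (YoungDiagram.mem_iff_lt_rowLen.1 hij) (h i).1)
    · intro i j hij
      exact YoungDiagram.mem_iff_lt_rowLen.2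
        (lt_of_lt_of_le (YoungDiagram.mem_iff_lt_rowLen.1 hij) (h i).2)

/-- Young diagram from its row lengths. -/
def ofFn (f : ℕ → ℕ) (hf : Antitone f) (hN : ∃ N, f N = 0) : YoungDiagram where
  cells := (Finset.range (Nat.find hN) ×ˢ Finset.range (f 0)).filter (fun c => c.2 < f c.1)
  isLowerSet := by
    rintro ⟨i, j⟩ ⟨i0, j0⟩ h hm
    have h1 : i0 ≤ i := h.1
    have h2 : j0 ≤ j := h.2
    simp only [Finset.coe_filter, Finset.mem_product, Finset.mem_range, Set.mem_ofPred_eq] at hm ⊢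
    have := hf h1
    omega

theorem rowLen_ofFn (f : ℕ → ℕ) (hf : Antitone f) (hN : ∃ N, f N = 0) (i : ℕ) :
    (ofFn f hf hN).rowLen i = f i := by
  have key : ∀ j, (i, j) ∈ ofFn f hf hN ↔ j < f i := by
    intro j
    rw [← YoungDiagram.mem_cells]
    simp only [ofFn, Finset.mem_filter, Finset.mem_product, Finset.mem_range]
    constructor
    · exact fun h => h.2
    · intro h
      refine ⟨⟨?_, lt_of_lt_of_le h (hf (Nat.zero_le i))⟩, h⟩
      by_contra! hc
      have := hf hc
      rw [Nat.find_spec hN] at this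
      omega
  have key2 : ∀ j, j < (ofFn f hf hN).rowLen i ↔ j < f i := fun j =>
    YoungDiagram.mem_iff_lt_rowLen.symm.trans (key j)
  have a := key2 (f i)
  have b := key2 ((ofFn f hf hN).rowLen i)
  omega

theorem ext_rowLen {a b : YoungDiagram} (h : ∀ i, a.rowLen i = b.rowLen i) : a = b := by
  apply SetLike.ext
  rintro ⟨i, j⟩
  rw [YoungDiagram.mem_iff_lt_rowLen, YoungDiagram.mem_iff_lt_rowLen, h]

theorem rowLen_eq_zero (a : YoungDiagram) {i : ℕ} (h : a.colLen 0 ≤ i) : a.rowLen i = 0 := by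
  by_contra hc
  have : (i, 0) ∈ a := YoungDiagram.mem_iff_lt_rowLen.2 (Nat.pos_of_ne_zero hc)
  have := YoungDiagram.mem_iff_lt_colLen.1 this
  omega

theorem card_eq_sum (a : YoungDiagram) (N : ℕ) (h : a.rowLen N = 0) :
    a.card = ∑ i ∈ Finset.range N, a.rowLen i := by
  have : ∀ c ∈ a.cells, c.1 ∈ Finset.range N := by
    rintro ⟨i, j⟩ hc
    rw [Finset.mem_range]
    by_contra! hN
    have h1 := YoungDiagram.mem_iff_lt_rowLen.1 ((YoungDiagram.mem_cells _).1 hc)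
    have h2 := a.rowLen_anti N i hN
    omega
  rw [YoungDiagram.card, Finset.card_eq_sum_card_fiberwise this]
  refine Finset.sum_congr rfl fun i _ => ?_
  rw [YoungDiagram.rowLen_eq_card]
  rfl

theorem HS_card {ρ lam : YoungDiagram} (h : HS ρ lam) : ρ.card ≤ lam.card :=
  Finset.card_le_card h.1

/-- `λ_{i+1}` from `ρ_i` and vice versa: the toggle. -/
def tog (α β : YoungDiagram) (i x : ℕ) : ℕ :=
  min (α.rowLen i) (β.rowLen i) + max (α.rowLen (i + 1)) (β.rowLen (i + 1)) - x

/-- shape below. -/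
def down (α β lam : YoungDiagram) (h1 : HS α lam) (h2 : HS β lam) : YoungDiagram :=
  ofFn (fun i => tog α β i (lam.rowLen (i + 1)))
    (by
      rw [HS_iff] at h1 h2
      apply antitone_nat_of_succ_le
      intro i
      have a1 := h1 i
      have a2 := h2 i
      have b1 := h1 (i + 1)
      have b2 := h2 (i + 1)
      have c1 := h1 (i + 1 + 1)
      have c2 := h2 (i + 1 + 1)
      simp only [tog]
      omega)
    ⟨α.colLen 0, by
      have e1 := rowLen_eq_zero α (le_refl _)
      have e2 := rowLen_eq_zero α (show α.colLen 0 ≤ α.colLen 0 + 1 by omega)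
      rw [HS_iff] at h1 h2
      have c1 := h1 (α.colLen 0)
      have c2 := h2 (α.colLen 0 + 1)
      simp only [tog]
      omega⟩

/-- shape above. -/
def up (α β ρ : YoungDiagram) (k : ℕ) (h1 : HS ρ α) (h2 : HS ρ β) : YoungDiagram :=
  ofFn (fun i => match i with
      | 0 => max (α.rowLen 0) (β.rowLen 0) + k
      | i + 1 => tog α β i (ρ.rowLen i))
    (by
      rw [HS_iff] at h1 h2
      apply antitone_nat_of_succ_le
      intro i
      cases i with
      | zero =>
        have a1 := h1 0
        have a2 := h2 0
        simp only [tog]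
        omega
      | succ i =>
        have a1 := h1 i
        have a2 := h2 i
        have b1 := h1 (i + 1)
        have b2 := h2 (i + 1)
        simp only [tog]
        omega)
    ⟨α.colLen 0 + β.colLen 0 + 1, by
      have e1 := rowLen_eq_zero α (show α.colLen 0 ≤ α.colLen 0 + β.colLen 0 by omega)
      have e2 := rowLen_eq_zero α (show α.colLen 0 ≤ α.colLen 0 + β.colLen 0 + 1 by omega)
      have e3 := rowLen_eq_zero β (show β.colLen 0 ≤ α.colLen 0 + β.colLen 0 + 1 by omega)
      simp only [tog]
      omega⟩

theorem size_rel (α β lam ρ : YoungDiagram) (k : ℕ)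
    (h0 : lam.rowLen 0 = max (α.rowLen 0) (β.rowLen 0) + k)
    (hs : ∀ i, lam.rowLen (i + 1) + ρ.rowLen i =
      min (α.rowLen i) (β.rowLen i) + max (α.rowLen (i + 1)) (β.rowLen (i + 1))) :
    lam.card + ρ.card = α.card + β.card + k := by
  obtain ⟨N, n1, n2, n3, n4⟩ : ∃ N, α.colLen 0 ≤ N ∧ β.colLen 0 ≤ N ∧
      lam.colLen 0 ≤ N ∧ ρ.colLen 0 ≤ N :=
    ⟨α.colLen 0 + β.colLen 0 + lam.colLen 0 + ρ.colLen 0, by omega, by omega, by omega, by omega⟩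
  rw [card_eq_sum α N (rowLen_eq_zero _ n1), card_eq_sum β N (rowLen_eq_zero _ n2),
    card_eq_sum lam (N + 1) (rowLen_eq_zero _ (by omega)),
    card_eq_sum ρ N (rowLen_eq_zero _ n4), Finset.sum_range_succ', add_right_comm,
    ← Finset.sum_add_distrib, Finset.sum_congr rfl (fun i _ => hs i), Finset.sum_add_distrib, h0]
  have e := Finset.sum_range_succ' (fun i => max (α.rowLen i) (β.rowLen i)) N
  rw [Finset.sum_range_succ, rowLen_eq_zero α n1, rowLen_eq_zero β n2] at e
  have : ∑ i ∈ Finset.range N, (α.rowLen i + β.rowLen i) =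
      ∑ i ∈ Finset.range N, min (α.rowLen i) (β.rowLen i) +
      ∑ i ∈ Finset.range N, max (α.rowLen i) (β.rowLen i) := by
    rw [← Finset.sum_add_distrib]
    exact Finset.sum_congr rfl fun i _ => by omega
  rw [Finset.sum_add_distrib] at this
  simp only [max_self, add_zero] at e
  omega

theorem down_spec (α β lam : YoungDiagram) (h1 : HS α lam) (h2 : HS β lam) :
    HS (down α β lam h1 h2) α ∧ HS (down α β lam h1 h2) β ∧
    (∀ i, lam.rowLen (i + 1) + (down α β lam h1 h2).rowLen i =
      min (α.rowLen i) (β.rowLen i) + max (α.rowLen (i + 1)) (β.rowLen (i + 1))) ∧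
    lam.rowLen 0 = max (α.rowLen 0) (β.rowLen 0) +
      (lam.rowLen 0 - max (α.rowLen 0) (β.rowLen 0)) := by
  have r : ∀ i, (down α β lam h1 h2).rowLen i = tog α β i (lam.rowLen (i + 1)) := fun i =>
    rowLen_ofFn _ _ _ i
  rw [HS_iff, HS_iff]
  simp only [r]
  rw [HS_iff] at h1 h2
  refine ⟨fun i => ?_, fun i => ?_, fun i => ?_, ?_⟩
  all_goals first
    | (have a1 := h1 i
       have a2 := h2 i
       have b1 := h1 (i + 1)
       have b2 := h2 (i + 1)
       simp only [tog]
       omega)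
    | (have a1 := h1 0
       have a2 := h2 0
       omega)

theorem up_spec (α β ρ : YoungDiagram) (k : ℕ) (h1 : HS ρ α) (h2 : HS ρ β) :
    HS α (up α β ρ k h1 h2) ∧ HS β (up α β ρ k h1 h2) ∧
    (∀ i, (up α β ρ k h1 h2).rowLen (i + 1) + ρ.rowLen i =
      min (α.rowLen i) (β.rowLen i) + max (α.rowLen (i + 1)) (β.rowLen (i + 1))) ∧
    (up α β ρ k h1 h2).rowLen 0 = max (α.rowLen 0) (β.rowLen 0) + k := by
  have r0 : (up α β ρ k h1 h2).rowLen 0 = max (α.rowLen 0) (β.rowLen 0) + k :=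
    rowLen_ofFn _ _ _ 0
  have r : ∀ i, (up α β ρ k h1 h2).rowLen (i + 1) = tog α β i (ρ.rowLen i) := fun i =>
    rowLen_ofFn _ _ _ (i + 1)
  rw [HS_iff, HS_iff]
  rw [HS_iff] at h1 h2
  refine ⟨fun i => ?_, fun i => ?_, fun i => ?_, r0⟩
  · rw [r i]
    have a1 := h1 i
    have a2 := h2 i
    cases i with
    | zero => simp only [tog, r0]; omega
    | succ i =>
      have b1 := h1 i
      have b2 := h2 i
      simp only [tog, r]
      omega
  · rw [r i]
    have a1 := h1 i
    have a2 := h2 i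
    cases i with
    | zero => simp only [tog, r0]; omega
    | succ i =>
      have b1 := h1 i
      have b2 := h2 i
      simp only [tog, r]
      omega
  · rw [r i]
    have a1 := h1 i
    have a2 := h2 i
    simp only [tog]
    omega

theorem up_down (α β lam : YoungDiagram) (h1 : HS α lam) (h2 : HS β lam)
    (g1 : HS (down α β lam h1 h2) α) (g2 : HS (down α β lam h1 h2) β) :
    up α β (down α β lam h1 h2) (lam.rowLen 0 - max (α.rowLen 0) (β.rowLen 0)) g1 g2 = lam := by
  obtain ⟨s1, s2, s3, s4⟩ := down_spec α β lam h1 h2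
  obtain ⟨t1, t2, t3, t4⟩ := up_spec α β _ (lam.rowLen 0 - max (α.rowLen 0) (β.rowLen 0)) g1 g2
  apply ext_rowLen
  intro i
  cases i with
  | zero => omega
  | succ i =>
    have := s3 i
    have := t3 i
    omega

theorem down_up (α β ρ : YoungDiagram) (k : ℕ) (h1 : HS ρ α) (h2 : HS ρ β)
    (g1 : HS α (up α β ρ k h1 h2)) (g2 : HS β (up α β ρ k h1 h2)) :
    down α β (up α β ρ k h1 h2) g1 g2 = ρ := by
  obtain ⟨s1, s2, s3, s4⟩ := up_spec α β ρ k h1 h2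
  obtain ⟨t1, t2, t3, t4⟩ := down_spec α β _ g1 g2
  apply ext_rowLen
  intro i
  have := s3 i
  have := t3 i
  omega

/-- The local rule. -/
def localEquiv (α β : YoungDiagram) (a b : ℕ) :
    {lam : YoungDiagram // (HS α lam ∧ lam.card = α.card + a) ∧
      (HS β lam ∧ lam.card = β.card + b)} ≃
    {p : ℕ × YoungDiagram // (p.1 ≤ a ∧ p.1 ≤ b) ∧
      (HS p.2 α ∧ α.card = p.2.card + (b - p.1)) ∧
      (HS p.2 β ∧ β.card = p.2.card + (a - p.1))} where
  toFun x := ⟨(x.1.rowLen 0 - max (α.rowLen 0) (β.rowLen 0),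
      down α β x.1 x.2.1.1 x.2.2.1), by
    obtain ⟨lam, ⟨h1, c1⟩, ⟨h2, c2⟩⟩ := x
    obtain ⟨s1, s2, s3, s4⟩ := down_spec α β lam h1 h2
    have sz := size_rel _ _ _ _ _ s4 s3
    have t1 := HS_card s1
    have t2 := HS_card s2
    dsimp only
    refine ⟨⟨?_, ?_⟩, ⟨s1, ?_⟩, ⟨s2, ?_⟩⟩ <;> omega⟩
  invFun y := ⟨up α β y.1.2 y.1.1 y.2.2.1.1 y.2.2.2.1, by
    obtain ⟨⟨k, ρ⟩, ⟨k1, k2⟩, ⟨h1, c1⟩, ⟨h2, c2⟩⟩ := y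
    obtain ⟨s1, s2, s3, s4⟩ := up_spec α β ρ k h1 h2
    have sz := size_rel _ _ _ _ _ s4 s3
    have k10 : k ≤ a := k1
    have k20 : k ≤ b := k2
    have c10 : α.card = ρ.card + (b - k) := c1
    have c20 : β.card = ρ.card + (a - k) := c2
    dsimp only
    refine ⟨⟨s1, ?_⟩, ⟨s2, ?_⟩⟩ <;> omega⟩
  left_inv := by
    rintro ⟨lam, ⟨h1, c1⟩, ⟨h2, c2⟩⟩
    exact Subtype.ext (up_down α β lam h1 h2 (down_spec α β lam h1 h2).1
      (down_spec α β lam h1 h2).2.1)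
  right_inv := by
    intro y
    apply Subtype.ext
    refine Prod.ext ?_ ?_
    · have := (up_spec α β y.1.2 y.1.1 y.2.2.1.1 y.2.2.2.1).2.2.2
      show (up α β y.1.2 y.1.1 y.2.2.1.1 y.2.2.2.1).rowLen 0 - _ = y.1.1
      omega
    · exact down_up α β y.1.2 y.1.1 y.2.2.1.1 y.2.2.2.1
        (up_spec α β y.1.2 y.1.1 y.2.2.1.1 y.2.2.2.1).1
        (up_spec α β y.1.2 y.1.1 y.2.2.1.1 y.2.2.2.1).2.1

/-- Indicator: `λ/ρ` is a horizontal strip of size `a`. -/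
noncomputable def H (a : ℕ) (ρ lam : YoungDiagram) : ℝ≥0∞ :=
  ind (HS ρ lam ∧ lam.card = ρ.card + a)

theorem local_rule (α β : YoungDiagram) (a b : ℕ) :
    ∑' lam, H a α lam * H b β lam =
      ∑' k : ℕ, ∑' ρ, ind (k ≤ a ∧ k ≤ b) * (H (b - k) ρ α * H (a - k) ρ β) := by
  have := cnt_congr (localEquiv α β a b)
  rw [cnt_subtype, cnt_subtype, ENNReal.tsum_prod'] at this
  simpa only [ind_and, H] using this

/-- Semistandard tableaux of shape `λ` with entries in `{0, …, m-1}` and content `μ`. -/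
abbrev S (m : ℕ) (μ : Fin m → ℕ) (lam : YoungDiagram) : Type :=
  {T : SemistandardYoungTableau lam // (∀ i j, (i, j) ∈ lam → T i j < m) ∧ HasContent T μ}

/-- Number of such tableaux. -/
noncomputable def K (m : ℕ) (μ : Fin m → ℕ) (lam : YoungDiagram) : ℝ≥0∞ := cnt (S m μ lam)

/-- The subdiagram of the entries less than `m`. -/
def sub {lam : YoungDiagram} (T : SemistandardYoungTableau lam) (m : ℕ) : YoungDiagram where
  cells := lam.cells.filter fun c => T c.1 c.2 < m
  isLowerSet := by
    rintro ⟨i, j⟩ ⟨i0, j0⟩ h hm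
    have h1 : i0 ≤ i := h.1
    have h2 : j0 ≤ j := h.2
    simp only [Finset.coe_filter, YoungDiagram.mem_cells, Set.mem_ofPred_eq] at hm ⊢
    refine ⟨lam.up_left_mem h1 h2 hm.1, ?_⟩
    have a1 : T i0 j0 ≤ T i0 j := T.row_weak_of_le h2 (lam.up_left_mem h1 le_rfl hm.1)
    have a2 : T i0 j ≤ T i j := T.col_weak h1 hm.1
    omega

theorem mem_sub {lam : YoungDiagram} (T : SemistandardYoungTableau lam) (m i j : ℕ) :
    (i, j) ∈ sub T m ↔ (i, j) ∈ lam ∧ T i j < m := by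
  rw [← YoungDiagram.mem_cells]
  simp [sub]

/-- Restriction of a tableau. -/
def restr {lam : YoungDiagram} (T : SemistandardYoungTableau lam) (ρ : YoungDiagram)
    (h : ρ ≤ lam) : SemistandardYoungTableau ρ where
  entry i j := if (i, j) ∈ ρ then T i j else 0
  row_weak' := by
    intro i j1 j2 hj hm
    have := ρ.up_left_mem le_rfl hj.le hm
    simp only [hm, this, if_true]
    exact T.row_weak hj (h hm)
  col_strict' := by
    intro i1 i2 j hi hm
    have := ρ.up_left_mem hi.le le_rfl hm
    simp only [hm, this, if_true]
    exact T.col_strict hi (h hm)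
  zeros' := by
    intro i j hm
    simp [hm]

theorem restr_apply {lam : YoungDiagram} (T : SemistandardYoungTableau lam) (ρ : YoungDiagram)
    (h : ρ ≤ lam) (i j : ℕ) : restr T ρ h i j = if (i, j) ∈ ρ then T i j else 0 := rfl

/-- Extension of a tableau by a horizontal strip of entries `m`. -/
def extn {ρ : YoungDiagram} (T : SemistandardYoungTableau ρ) (m : ℕ)
    (hT : ∀ i j, (i, j) ∈ ρ → T i j < m) (lam : YoungDiagram)
    (h : HS ρ lam) : SemistandardYoungTableau lam where
  entry i j := if (i, j) ∈ ρ then T i j else if (i, j) ∈ lam then m else 0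
  row_weak' := by
    intro i j1 j2 hj hm
    have hm1 := lam.up_left_mem le_rfl hj.le hm
    by_cases h2 : (i, j2) ∈ ρ
    · have := ρ.up_left_mem le_rfl hj.le h2
      simp only [h2, this, if_true]
      exact T.row_weak hj h2
    · by_cases h1 : (i, j1) ∈ ρ
      · simp only [h2, h1, hm, if_true, if_false]
        exact (hT _ _ h1).le
      · simp [h2, h1, hm, hm1]
  col_strict' := by
    intro i1 i2 j hi hm
    have h1 : (i1, j) ∈ ρ := h.2 _ _ (lam.up_left_mem (show i1 + 1 ≤ i2 from hi) le_rfl hm)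
    by_cases h2 : (i2, j) ∈ ρ
    · simp only [h2, h1, if_true]
      exact T.col_strict hi h2
    · simp only [h2, h1, hm, if_true, if_false]
      exact hT _ _ h1
  zeros' := by
    intro i j hm
    have : (i, j) ∉ ρ := fun hh => hm (h.1 hh)
    simp [hm, this]

theorem extn_apply {ρ : YoungDiagram} (T : SemistandardYoungTableau ρ) (m : ℕ)
    (hT : ∀ i j, (i, j) ∈ ρ → T i j < m) (lam : YoungDiagram) (h : HS ρ lam) (i j : ℕ) :
    extn T m hT lam h i j = if (i, j) ∈ ρ then T i j else if (i, j) ∈ lam then m else 0 := rfl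

theorem sub_HS {lam : YoungDiagram} (T : SemistandardYoungTableau lam) (m : ℕ)
    (hT : ∀ i j, (i, j) ∈ lam → T i j < m + 1) : HS (sub T m) lam := by
  constructor
  · rintro ⟨i, j⟩ h
    exact ((mem_sub T m i j).1 h).1
  · intro i j h
    rw [mem_sub]
    have := T.col_strict (show i < i + 1 by omega) h
    have := hT _ _ h
    exact ⟨lam.up_left_mem (Nat.le_succ i) le_rfl h, by omega⟩

theorem sub_card {lam : YoungDiagram} (T : SemistandardYoungTableau lam) (m : ℕ)
    (hT : ∀ i j, (i, j) ∈ lam → T i j < m + 1) :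
    lam.card = (sub T m).card + (lam.cells.filter fun c => T c.1 c.2 = m).card := by
  have h : lam.cells.filter (fun c => T c.1 c.2 = m) =
      lam.cells.filter (fun c => ¬ T c.1 c.2 < m) := by
    apply Finset.filter_congr
    rintro ⟨i, j⟩ h
    have := hT i j ((YoungDiagram.mem_cells _).1 h)
    dsimp only
    omega
  rw [h]
  exact (Finset.card_filter_add_card_filter_not (s := lam.cells) (fun c => T c.1 c.2 < m)).symm

theorem restr_content {lam : YoungDiagram} (T : SemistandardYoungTableau lam) (m : ℕ)
    (ρ : YoungDiagram) (e : sub T m = ρ) (h : ρ ≤ lam) (i : ℕ) (hi : i < m) :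
    (ρ.cells.filter fun c => restr T ρ h c.1 c.2 = i) =
      lam.cells.filter fun c => T c.1 c.2 = i := by
  subst e
  ext ⟨a, b⟩
  rw [Finset.mem_filter, Finset.mem_filter, YoungDiagram.mem_cells, YoungDiagram.mem_cells,
    restr_apply]
  constructor
  · rintro ⟨h1, h2⟩
    rw [if_pos h1] at h2
    exact ⟨h h1, h2⟩
  · rintro ⟨h1, h2⟩
    have : (a, b) ∈ sub T m := (mem_sub T m a b).2 ⟨h1, lt_of_eq_of_lt h2 hi⟩
    rw [if_pos this]
    exact ⟨this, h2⟩

theorem sub_extn {ρ : YoungDiagram} (T : SemistandardYoungTableau ρ) (m : ℕ)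
    (hT : ∀ i j, (i, j) ∈ ρ → T i j < m) (lam : YoungDiagram) (h : HS ρ lam) :
    sub (extn T m hT lam h) m = ρ := by
  apply SetLike.ext
  rintro ⟨i, j⟩
  rw [mem_sub, extn_apply]
  by_cases h1 : (i, j) ∈ ρ
  · simp [h1, hT _ _ h1, h.1 h1]
  · by_cases h2 : (i, j) ∈ lam <;> simp [h1, h2]

theorem restr_extn {ρ : YoungDiagram} (T : SemistandardYoungTableau ρ) (m : ℕ)
    (hT : ∀ i j, (i, j) ∈ ρ → T i j < m) (lam : YoungDiagram) (h : HS ρ lam) :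
    restr (extn T m hT lam h) ρ h.1 = T := by
  ext i j
  rw [restr_apply, extn_apply]
  by_cases h1 : (i, j) ∈ ρ
  · simp [h1]
  · simp [h1, T.zeros h1]

theorem extn_lt {ρ : YoungDiagram} (T : SemistandardYoungTableau ρ) (m : ℕ)
    (hT : ∀ i j, (i, j) ∈ ρ → T i j < m) (lam : YoungDiagram) (h : HS ρ lam) (i j : ℕ) :
    extn T m hT lam h i j < m + 1 := by
  rw [extn_apply]
  split_ifs with h1 h2
  · exact (hT _ _ h1).trans (Nat.lt_succ_self m)
  · omega
  · omega

/-- Peeling off the largest entry. -/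
def peelEquiv (m : ℕ) (μ : Fin (m + 1) → ℕ) (lam ρ : YoungDiagram) (h : HS ρ lam)
    (hc : lam.card = ρ.card + μ (Fin.last m)) :
    {T : S (m + 1) μ lam // sub T.1 m = ρ} ≃ S m (Fin.init μ) ρ where
  toFun x := ⟨restr x.1.1 ρ h.1, by
    obtain ⟨⟨T, h1, h2⟩, rfl⟩ := x
    constructor
    · intro i j hij
      dsimp only at *
      rw [restr_apply, if_pos hij]
      exact ((mem_sub _ _ _ _).1 hij).2
    · intro i
      dsimp only at *
      rw [restr_content T m _ rfl h.1 i i.2]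
      exact h2 i.castSucc⟩
  invFun y := ⟨⟨extn y.1 m y.2.1 lam h, by
    obtain ⟨T, h1, h2⟩ := y
    have e := sub_extn T m h1 lam h
    refine ⟨fun i j _ => extn_lt T m h1 lam h i j, ?_⟩
    intro i
    refine Fin.lastCases ?_ (fun i => ?_) i
    · have := sub_card (extn T m h1 lam h) m (fun i j _ => extn_lt T m h1 lam h i j)
      rw [e] at this
      simp only [Fin.val_last]
      omega
    · have e1 := restr_content (extn T m h1 lam h) m ρ e h.1 i i.2
      simp only [Fin.val_castSucc]
      rw [← e1, restr_extn]
      exact h2 i⟩, sub_extn y.1 m y.2.1 lam h⟩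
  left_inv := by
    rintro ⟨⟨T, h1, h2⟩, rfl⟩
    apply Subtype.ext
    apply Subtype.ext
    dsimp only
    ext i j
    rw [extn_apply, restr_apply]
    by_cases a : (i, j) ∈ sub T m
    · simp [a]
    · by_cases b : (i, j) ∈ lam
      · have := h1 i j b
        have : ¬ T i j < m := fun c => a ((mem_sub _ _ _ _).2 ⟨b, c⟩)
        simp [a, b]
        omega
      · simp [a, b, T.zeros b]
  right_inv := by
    rintro ⟨T, h1, h2⟩
    exact Subtype.ext (restr_extn T m h1 lam h)

theorem K_succ (m : ℕ) (μ : Fin (m + 1) → ℕ) (lam : YoungDiagram) :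
    K (m + 1) μ lam = ∑' ρ, H (μ (Fin.last m)) ρ lam * K m (Fin.init μ) ρ := by
  rw [K, cnt_fiber (fun T : S (m + 1) μ lam => sub T.1 m)]
  refine tsum_congr fun ρ => ?_
  by_cases h : HS ρ lam ∧ lam.card = ρ.card + μ (Fin.last m)
  · rw [H, ind_true h, one_mul, K]
    exact cnt_congr (peelEquiv m μ lam ρ h.1 h.2)
  · rw [H, ind_false h, zero_mul]
    apply cnt_empty
    rintro ⟨⟨T, h1, h2⟩, rfl⟩
    apply h
    refine ⟨sub_HS T m h1, ?_⟩
    rw [← h2 (Fin.last m)]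
    exact sub_card T m h1

theorem K_zero (μ : Fin 0 → ℕ) (lam : YoungDiagram) : K 0 μ lam = ind (lam = ⊥) := by
  by_cases h : lam = ⊥
  · subst h
    rw [ind_true rfl]
    refine cnt_one ⟨SemistandardYoungTableau.highestWeight ⊥, ?_, fun i => i.elim0⟩ ?_
    · intro i j h
      exact absurd h (YoungDiagram.notMem_bot _)
    · intro y
      apply Subtype.ext
      ext i j
      rw [SemistandardYoungTableau.zeros _ (YoungDiagram.notMem_bot _),
        SemistandardYoungTableau.zeros _ (YoungDiagram.notMem_bot _)]
  · rw [ind_false h]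
    apply cnt_empty
    rintro ⟨T, h1, h2⟩
    apply h
    apply SetLike.ext
    rintro ⟨i, j⟩
    constructor
    · intro hm
      exact absurd (h1 i j hm) (Nat.not_lt_zero _)
    · intro hm
      exact absurd hm (YoungDiagram.notMem_bot _)

theorem tsum_snoc {l : ℕ} (f : (Fin (l + 1) → ℕ) → ℝ≥0∞) :
    ∑' c, f c = ∑' (k : ℕ) (c : Fin l → ℕ), f (Fin.snoc c k) := by
  rw [← (Fin.snocEquiv (fun _ : Fin (l + 1) => ℕ)).tsum_eq, ENNReal.tsum_prod']
  rfl

theorem row_comm (a l : ℕ) (ν : Fin l → ℕ) (α : YoungDiagram) :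
    ∑' lam, H a α lam * K l ν lam =
      ∑' c : Fin l → ℕ, ind (c ≤ ν ∧ ∑ j, c j = a) * K l (ν - c) α := by
  induction l generalizing a α with
  | zero =>
    have e : ∀ c : Fin 0 → ℕ, ind (c ≤ ν ∧ ∑ j, c j = a) * K 0 (ν - c) α =
        ind (a = 0) * ind (α = ⊥) := by
      intro c
      rw [K_zero]
      congr 1
      apply ind_congr
      constructor
      · rintro ⟨_, h⟩
        simpa using h.symm
      · rintro rfl
        exact ⟨fun j => j.elim0, by simp⟩
    rw [tsum_congr e]
    simp only [K_zero]
    rw [tsum_eq_single (default : Fin 0 → ℕ) (fun b hb => absurd (Subsingleton.elim _ _) hb),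
      tsum_eq_single (⊥ : YoungDiagram) (fun b hb => by rw [ind_false hb, mul_zero]),
      ind_true rfl, mul_one, H, ← ind_and]
    apply ind_congr
    have hb : (⊥ : YoungDiagram).card = 0 := by simp
    rw [hb]
    constructor
    · rintro ⟨h1, h2⟩
      exact ⟨by omega, le_bot_iff.1 h1.1⟩
    · rintro ⟨rfl, rfl⟩
      refine ⟨⟨le_rfl, fun i j h => absurd h (YoungDiagram.notMem_bot _)⟩, by omega⟩
  | succ l ih =>
    have init_sub : ∀ (c : Fin l → ℕ) (k : ℕ),
        (Fin.init (ν - Fin.snoc c k : Fin (l + 1) → ℕ) : Fin l → ℕ) = Fin.init ν - c := by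
      intro c k
      ext i
      simp [Fin.init]
    have cond : ∀ (c : Fin l → ℕ) (k : ℕ),
        ind ((Fin.snoc c k : Fin (l + 1) → ℕ) ≤ ν ∧ ∑ j, (Fin.snoc c k : Fin (l + 1) → ℕ) j = a) =
        ind (k ≤ a ∧ k ≤ ν (Fin.last l)) * ind (c ≤ Fin.init ν ∧ ∑ j, c j = a - k) := by
      intro c k
      rw [← ind_and]
      apply ind_congr
      rw [Fin.sum_univ_castSucc, Pi.le_def, Fin.forall_fin_succ']
      simp only [Fin.snoc_castSucc, Fin.snoc_last]
      constructor
      · rintro ⟨⟨h1, h2⟩, h3⟩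
        exact ⟨⟨by omega, h2⟩, h1, by omega⟩
      · rintro ⟨⟨h1, h2⟩, h3, h4⟩
        exact ⟨⟨h3, h2⟩, by omega⟩
    calc ∑' lam, H a α lam * K (l + 1) ν lam
        = ∑' lam, ∑' β, H a α lam * H (ν (Fin.last l)) β lam * K l (Fin.init ν) β := by
          refine tsum_congr fun lam => ?_
          rw [K_succ, ← ENNReal.tsum_mul_left]
          simp only [mul_assoc]
      _ = ∑' β, (∑' lam, H a α lam * H (ν (Fin.last l)) β lam) * K l (Fin.init ν) β := by
          rw [ENNReal.tsum_comm]
          simp only [ENNReal.tsum_mul_right]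
      _ = ∑' β, ∑' k : ℕ, ∑' ρ, ind (k ≤ a ∧ k ≤ ν (Fin.last l)) *
            (H (ν (Fin.last l) - k) ρ α * H (a - k) ρ β) * K l (Fin.init ν) β := by
          simp only [local_rule, ENNReal.tsum_mul_right]
      _ = ∑' k : ℕ, ∑' ρ, ∑' β, ind (k ≤ a ∧ k ≤ ν (Fin.last l)) *
            (H (ν (Fin.last l) - k) ρ α * H (a - k) ρ β) * K l (Fin.init ν) β := by
          rw [ENNReal.tsum_comm]
          exact tsum_congr fun k => ENNReal.tsum_comm
      _ = ∑' k : ℕ, ∑' ρ, ind (k ≤ a ∧ k ≤ ν (Fin.last l)) * (H (ν (Fin.last l) - k) ρ α *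
            ∑' β, H (a - k) ρ β * K l (Fin.init ν) β) := by
          refine tsum_congr fun k => tsum_congr fun ρ => ?_
          rw [← ENNReal.tsum_mul_left, ← ENNReal.tsum_mul_left]
          exact tsum_congr fun β => by ring
      _ = ∑' k : ℕ, ∑' ρ, ∑' c : Fin l → ℕ, ind (k ≤ a ∧ k ≤ ν (Fin.last l)) *
            (H (ν (Fin.last l) - k) ρ α *
              (ind (c ≤ Fin.init ν ∧ ∑ j, c j = a - k) * K l (Fin.init ν - c) ρ)) := by
          simp only [ih, ENNReal.tsum_mul_left]
      _ = ∑' k : ℕ, ∑' c : Fin l → ℕ, ∑' ρ, ind (k ≤ a ∧ k ≤ ν (Fin.last l)) *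
            (H (ν (Fin.last l) - k) ρ α *
              (ind (c ≤ Fin.init ν ∧ ∑ j, c j = a - k) * K l (Fin.init ν - c) ρ)) :=
          tsum_congr fun k => ENNReal.tsum_comm
      _ = _ := by
          rw [tsum_snoc]
          refine tsum_congr fun k => tsum_congr fun c => ?_
          rw [cond, K_succ, init_sub, ← ENNReal.tsum_mul_left]
          refine tsum_congr fun ρ => ?_
          simp only [Pi.sub_apply, Fin.snoc_last]
          ring

/-- The type of matrices. -/
abbrev MT {m l : ℕ} (μ : Fin m → ℕ) (ν : Fin l → ℕ) : Type :=
  {M : Fin m → Fin l → ℕ // (∀ i, ∑ j, M i j = μ i) ∧ (∀ j, ∑ i, M i j = ν j)}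

/-- Peeling off the last row. -/
def rowEquiv {m l : ℕ} (μ : Fin (m + 1) → ℕ) (ν : Fin l → ℕ) (c : Fin l → ℕ)
    (h : c ≤ ν ∧ ∑ j, c j = μ (Fin.last m)) :
    {M : MT μ ν // M.1 (Fin.last m) = c} ≃ MT (Fin.init μ) (ν - c) where
  toFun x := ⟨fun i => x.1.1 i.castSucc, fun i => x.1.2.1 i.castSucc, fun j => by
    obtain ⟨⟨M, h1, h2⟩, rfl⟩ := x
    have := h2 j
    rw [Fin.sum_univ_castSucc] at this
    simp only [Pi.sub_apply]
    omega⟩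
  invFun y := ⟨⟨Fin.snoc (α := fun _ => Fin l → ℕ) y.1 c, by
    obtain ⟨M, h1, h2⟩ := y
    constructor
    · intro i
      refine Fin.lastCases ?_ (fun i => ?_) i
      · simpa using h.2
      · simpa [Fin.init] using h1 i
    · intro j
      have := h2 j
      have := h.1 j
      simp only [Pi.sub_apply] at *
      simp only [Fin.sum_univ_castSucc, Fin.snoc_castSucc, Fin.snoc_last]
      omega⟩, by simp⟩
  left_inv := by
    rintro ⟨⟨M, h1, h2⟩, rfl⟩
    apply Subtype.ext
    apply Subtype.ext
    exact Fin.snoc_init_self M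
  right_inv := by
    rintro ⟨M, h1, h2⟩
    apply Subtype.ext
    funext i
    simp

theorem N_succ {m l : ℕ} (μ : Fin (m + 1) → ℕ) (ν : Fin l → ℕ) :
    cnt (MT μ ν) = ∑' c : Fin l → ℕ, ind (c ≤ ν ∧ ∑ j, c j = μ (Fin.last m)) *
      cnt (MT (Fin.init μ) (ν - c)) := by
  rw [cnt_fiber (fun M : MT μ ν => M.1 (Fin.last m))]
  refine tsum_congr fun c => ?_
  by_cases h : c ≤ ν ∧ ∑ j, c j = μ (Fin.last m)
  · rw [ind_true h, one_mul]
    exact cnt_congr (rowEquiv μ ν c h)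
  · rw [ind_false h, zero_mul]
    apply cnt_empty
    rintro ⟨⟨M, h1, h2⟩, rfl⟩
    apply h
    refine ⟨fun j => ?_, h1 _⟩
    rw [← h2 j]
    exact Finset.single_le_sum (f := fun i => M i j) (fun _ _ => Nat.zero_le _)
      (Finset.mem_univ (Fin.last m))

theorem K_bot (l : ℕ) (ν : Fin l → ℕ) : K l ν ⊥ = ind (ν = 0) := by
  by_cases h : ν = 0
  · subst h
    rw [ind_true rfl]
    refine cnt_one ⟨SemistandardYoungTableau.highestWeight ⊥, ?_, fun i => ?_⟩ ?_
    · intro i j h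
      exact absurd h (YoungDiagram.notMem_bot _)
    · simp
    · intro y
      apply Subtype.ext
      ext i j
      rw [SemistandardYoungTableau.zeros _ (YoungDiagram.notMem_bot _),
        SemistandardYoungTableau.zeros _ (YoungDiagram.notMem_bot _)]
  · rw [ind_false h]
    apply cnt_empty
    rintro ⟨T, h1, h2⟩
    apply h
    funext i
    rw [← h2 i]
    simp

theorem N_zero {l : ℕ} (μ : Fin 0 → ℕ) (ν : Fin l → ℕ) : cnt (MT μ ν) = ind (ν = 0) := by
  by_cases h : ν = 0
  · subst h
    rw [ind_true rfl]
    exact cnt_one ⟨fun i => i.elim0, fun i => i.elim0, by simp⟩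
      (fun y => Subtype.ext (Subsingleton.elim _ _))
  · rw [ind_false h]
    apply cnt_empty
    rintro ⟨T, h1, h2⟩
    apply h
    funext i
    rw [← h2 i]
    simp

theorem main_sum (m l : ℕ) (μ : Fin m → ℕ) (ν : Fin l → ℕ) :
    ∑' lam, K m μ lam * K l ν lam = cnt (MT μ ν) := by
  induction m generalizing ν with
  | zero =>
    simp only [K_zero]
    rw [tsum_eq_single (⊥ : YoungDiagram) (fun b hb => by rw [ind_false hb, zero_mul]),
      ind_true rfl, one_mul, K_bot, N_zero]
  | succ m ih =>
    calc ∑' lam, K (m + 1) μ lam * K l ν lam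
        = ∑' lam, ∑' α, K m (Fin.init μ) α * (H (μ (Fin.last m)) α lam * K l ν lam) := by
          refine tsum_congr fun lam => ?_
          rw [K_succ, ← ENNReal.tsum_mul_right]
          exact tsum_congr fun α => by ring
      _ = ∑' α, K m (Fin.init μ) α * ∑' lam, H (μ (Fin.last m)) α lam * K l ν lam := by
          rw [ENNReal.tsum_comm]
          simp only [ENNReal.tsum_mul_left]
      _ = ∑' α, ∑' c : Fin l → ℕ, ind (c ≤ ν ∧ ∑ j, c j = μ (Fin.last m)) *
            (K m (Fin.init μ) α * K l (ν - c) α) := by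
          refine tsum_congr fun α => ?_
          rw [row_comm, ← ENNReal.tsum_mul_left]
          exact tsum_congr fun c => by ring
      _ = _ := by
          rw [ENNReal.tsum_comm, N_succ]
          simp only [ENNReal.tsum_mul_left, ih]

theorem content_sum {lam : YoungDiagram} (T : SemistandardYoungTableau lam) {m : ℕ}
    {μ : Fin m → ℕ} (hT : HasContent T μ) :
    (lam.cells.filter fun c => T c.1 c.2 < m).card = ∑ i, μ i := by
  rw [← Finset.sum_congr rfl (fun i _ => hT i),
    Fin.sum_univ_eq_sum_range (fun i => (lam.cells.filter fun c => T c.1 c.2 = i).card) m,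
    Finset.card_eq_sum_card_fiberwise (f := fun c => T c.1 c.2) (t := Finset.range m)
      (fun c hc => by simpa using (Finset.mem_filter.1 hc).2)]
  refine Finset.sum_congr rfl fun i hi => ?_
  rw [Finset.filter_filter]
  congr 1
  apply Finset.filter_congr
  intro c _
  have := Finset.mem_range.1 hi
  constructor
  · exact fun h => h.2
  · exact fun h => ⟨by omega, h⟩

theorem content_lt {lam : YoungDiagram} (T : SemistandardYoungTableau lam) {m : ℕ}
    {μ : Fin m → ℕ} (hT : HasContent T μ) (hc : lam.card = ∑ i, μ i) (i j : ℕ)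
    (h : (i, j) ∈ lam) : T i j < m := by
  have e := content_sum T hT
  rw [← hc] at e
  have := Finset.filter_card_eq e (i, j) ((YoungDiagram.mem_cells _).2 h)
  exact this

theorem card_of_content {lam : YoungDiagram} (T : SemistandardYoungTableau lam) {m : ℕ}
    {μ : Fin m → ℕ} (hT : HasContent T μ) (hlt : ∀ i j, (i, j) ∈ lam → T i j < m) :
    lam.card = ∑ i, μ i := by
  rw [← content_sum T hT, Finset.filter_true_of_mem]
  rintro ⟨i, j⟩ h
  exact hlt i j ((YoungDiagram.mem_cells _).1 h)

/-- Pairs of tableaux. -/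
def pairEquiv (n m l : ℕ) (μ : Fin m → ℕ) (ν : Fin l → ℕ)
    (hμs : ∑ i, μ i = n) (hνs : ∑ j, ν j = n) :
    {x : Σ lam : YoungDiagram,
        SemistandardYoungTableau lam × SemistandardYoungTableau lam //
        x.1.card = n ∧ HasContent x.2.1 μ ∧ HasContent x.2.2 ν} ≃
      Σ lam : YoungDiagram, S m μ lam × S l ν lam where
  toFun x := ⟨x.1.1,
    ⟨x.1.2.1, content_lt _ x.2.2.1 (x.2.1.trans hμs.symm), x.2.2.1⟩,
    ⟨x.1.2.2, content_lt _ x.2.2.2 (x.2.1.trans hνs.symm), x.2.2.2⟩⟩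
  invFun y := ⟨⟨y.1, y.2.1.1, y.2.2.1⟩,
    (card_of_content _ y.2.1.2.2 y.2.1.2.1).trans hμs, y.2.1.2.2, y.2.2.2.2⟩
  left_inv _ := rfl
  right_inv _ := rfl

end RSKCount

/-- `∑_{λ ⊢ n} K_{λ,μ} K_{λ,ν} = N_{μ,ν}`: the number of pairs `(P, Q)` of semistandard
Young tableaux of the same shape (a partition of `n`), with `P` of content `μ` and `Q` of
content `ν`, equals the number of non-negative integer matrices with row sums `μ` and
column sums `ν`. -/
theorem sum_kostka_mul_kostka (n : ℕ) (hn : 1 ≤ n) (m l : ℕ)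
    (μ : Fin m → ℕ) (ν : Fin l → ℕ)
    (hμa : Antitone μ) (hμp : ∀ i, 0 < μ i) (hμs : ∑ i, μ i = n)
    (hνa : Antitone ν) (hνp : ∀ j, 0 < ν j) (hνs : ∑ j, ν j = n) :
    Nat.card {x : Σ lam : YoungDiagram,
        SemistandardYoungTableau lam × SemistandardYoungTableau lam //
        x.1.card = n ∧ HasContent x.2.1 μ ∧ HasContent x.2.2 ν} =
      Nmat μ ν := by
  unfold Nmat
  apply RSKCount.natCard_eq_of_cnt
  rw [RSKCount.cnt_congr (RSKCount.pairEquiv n m l μ ν hμs hνs), RSKCount.cnt_sigma]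
  simp only [RSKCount.cnt_prod]
  exact RSKCount.main_sum m l μ ν
end

section
/- Let m_1,…,m_k and n_1,…,n_ℓ be positive integers with m_1·m_2·…·m_k = n_1·n_2·…·n_ℓ. Then there exists a k×ℓ matrix (a_{i,j}) of positive integers such that Π_{j=1}^ℓ a_{i,j} = m_i for every i, and Π_{i=1}^k a_{i,j} = n_j for every j. -/
theorem split_dvd_prod (l : ℕ) (n : Fin l → ℕ) (d : ℕ) (h : d ∣ ∏ j, n j) :
    ∃ b : Fin l → ℕ, (∀ j, b j ∣ n j) ∧ ∏ j, b j = d := by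
  induction l generalizing d with
  | zero => exact ⟨fun _ => 1, fun j => j.elim0, by simpa [eq_comm] using h⟩
  | succ l ih =>
    rw [Fin.prod_univ_succ] at h
    obtain ⟨x, y, hx, hy, rfl⟩ := exists_dvd_and_dvd_of_dvd_mul h
    obtain ⟨b, hb, rfl⟩ := ih _ y hy
    refine ⟨Fin.cons x b, fun j => ?_, by simp [Fin.prod_univ_succ]⟩
    refine Fin.cases ?_ (fun i => ?_) j
    · simpa using hx
    · simpa using hb i

theorem exists_matrix_aux (k l : ℕ) (m : Fin k → ℕ) (n : Fin l → ℕ)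
    (hm : ∀ i, 0 < m i) (h : ∏ i, m i = ∏ j, n j) :
    ∃ a : Fin k → Fin l → ℕ,
      (∀ i, ∏ j, a i j = m i) ∧ (∀ j, ∏ i, a i j = n j) := by
  induction k generalizing n with
  | zero =>
    refine ⟨fun _ _ => 1, fun i => i.elim0, fun j => ?_⟩
    have h1 : n j ∣ 1 := by
      have := Finset.dvd_prod_of_mem n (Finset.mem_univ j)
      rw [← h] at this
      simpa using this
    simpa using (Nat.dvd_one.mp h1).symm
  | succ k ih =>
    rw [Fin.prod_univ_succ] at h
    obtain ⟨b, hb, hbm⟩ := split_dvd_prod l n (m 0) (h ▸ Dvd.intro _ rfl)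
    choose c hc using hb
    have h2 : ∏ i : Fin k, m i.succ = ∏ j, c j := by
      apply Nat.eq_of_mul_eq_mul_left (hm 0)
      rw [h, ← hbm, ← Finset.prod_mul_distrib]
      exact Finset.prod_congr rfl fun j _ => hc j
    obtain ⟨a, ha, ha'⟩ := ih (fun i => m i.succ) c (fun i => hm _) h2
    refine ⟨Fin.cons b a, fun i => ?_, fun j => ?_⟩
    · refine Fin.cases ?_ (fun i => ?_) i
      · simpa using hbm
      · simpa using ha i
    · rw [Fin.prod_univ_succ, hc j, ← ha' j]
      simp

/-- Vaughan–Wooley / Granville–Soundararajan: if `m_1 ⋯ m_k = n_1 ⋯ n_l` with all `m_i, n_j`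
positive integers, there is a `k × l` matrix `(a_{i,j})` of positive integers whose `i`-th row
has product `m_i` and whose `j`-th column has product `n_j`. -/
theorem exists_gcd_matrix (k l : ℕ) (hk : 1 ≤ k) (hl : 1 ≤ l)
    (m : Fin k → ℕ) (n : Fin l → ℕ)
    (hm : ∀ i, 0 < m i) (hn : ∀ j, 0 < n j)
    (h : ∏ i, m i = ∏ j, n j) :
    ∃ a : Fin k → Fin l → ℕ,
      (∀ i j, 0 < a i j) ∧
      (∀ i, ∏ j, a i j = m i) ∧
      (∀ j, ∏ i, a i j = n j) := by
  obtain ⟨a, ha, hb⟩ := exists_matrix_aux k l m n hm h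
  refine ⟨a, fun i j => Nat.pos_of_ne_zero fun h0 => ?_, ha, hb⟩
  have h1 := ha i
  rw [Finset.prod_eq_zero (Finset.mem_univ j) h0] at h1
  exact (hm i).ne h1
end

section
/- Let n ≥ 1 and let μ = (μ_1,…,μ_m) and μ̃ = (μ̃_1,…,μ̃_ℓ) be partitions of n. For a finite field F with q elements, let S(F) denote the number of tuples (f_1,…,f_m, g_1,…,g_ℓ) of monic polynomials in F[T] with deg f_i = μ_i, deg g_j = μ̃_j, and f_1·…·f_m = g_1·…·g_ℓ. Then S(F)/q^n → N_{μ,μ̃} as q → ∞; that is, for every ε > 0 there exists C such that for every finite field F of cardinality q ≥ C, |S(F)/q^n − N_{μ,μ̃}| < ε. -/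
open Polynomial in
theorem pdc_monic_split {F : Type} [Field F] {f a b : F[X]} (hf : f.Monic) (h : f = a * b) :
    ∃ a' b' : F[X], a'.Monic ∧ b'.Monic ∧ f = a' * b' ∧ Associated a a' ∧ Associated b b' := by
  classical
  have h0 : a * b ≠ 0 := h ▸ hf.ne_zero
  have ha := left_ne_zero_of_mul h0
  have hb := right_ne_zero_of_mul h0
  refine ⟨normalize a, normalize b, monic_normalize ha, monic_normalize hb, ?_,
    (normalize_associated a).symm, (normalize_associated b).symm⟩
  refine eq_of_monic_of_associated hf ((monic_normalize ha).mul (monic_normalize hb)) ?_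
  rw [h]
  exact (normalize_associated a).symm.mul_mul (normalize_associated b).symm

open Polynomial in
theorem pdc_split_prod {F : Type} [Field F] : ∀ (l : ℕ) (f : F[X]) (g : Fin l → F[X]),
    f.Monic → (∀ j, (g j).Monic) → f ∣ ∏ j, g j →
    ∃ d e : Fin l → F[X], (∀ j, (d j).Monic) ∧ (∀ j, (e j).Monic) ∧
      (∀ j, g j = d j * e j) ∧ f = ∏ j, d j := by
  intro l
  induction l with
  | zero =>
    intro f g hf hg h
    refine ⟨g, g, hg, hg, fun j => j.elim0, ?_⟩
    simp only [Finset.univ_eq_empty, Finset.prod_empty] at h ⊢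
    exact hf.eq_one_of_isUnit (isUnit_of_dvd_one h)
  | succ l ih =>
    intro f g hf hg h
    rw [Fin.prod_univ_succ] at h
    obtain ⟨a, b, ha, hb, hab⟩ := exists_dvd_and_dvd_of_dvd_mul h
    obtain ⟨a', b', ha', hb', hab', haa, hbb⟩ := pdc_monic_split hf hab
    obtain ⟨d, e, hd, he, hde, hbd⟩ :=
      ih b' (fun j => g j.succ) hb' (fun j => hg _) (hbb.dvd_iff_dvd_left.1 hb)
    obtain ⟨c, hc⟩ := haa.dvd_iff_dvd_left.1 ha
    have hcm : c.Monic := Monic.of_mul_monic_left ha' (hc ▸ hg 0)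
    refine ⟨Fin.cons a' d, Fin.cons c e, ?_, ?_, ?_, ?_⟩
    · intro j; refine Fin.cases ?_ ?_ j <;> simp [ha', hd]
    · intro j; refine Fin.cases ?_ ?_ j <;> simp [hcm, he]
    · intro j; refine Fin.cases ?_ ?_ j
      · simpa using hc
      · intro i; simpa using hde i
    · rw [Fin.prod_univ_succ]; simp [hab', hbd]

open Polynomial in
theorem pdc_refine {F : Type} [Field F] (l : ℕ) : ∀ (m : ℕ) (f : Fin m → F[X]) (g : Fin l → F[X]),
    (∀ i, (f i).Monic) → (∀ j, (g j).Monic) → ∏ i, f i = ∏ j, g j →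
    ∃ h : Fin m → Fin l → F[X], (∀ i j, (h i j).Monic) ∧
      (∀ i, ∏ j, h i j = f i) ∧ (∀ j, ∏ i, h i j = g j) := by
  intro m
  induction m with
  | zero =>
    intro f g hf hg h
    refine ⟨fun i => i.elim0, fun i => i.elim0, fun i => i.elim0, ?_⟩
    intro j
    simp only [Finset.univ_eq_empty, Finset.prod_empty] at h ⊢
    refine ((hg j).eq_one_of_isUnit (isUnit_of_dvd_one ?_)).symm
    rw [h]
    exact Finset.dvd_prod_of_mem _ (Finset.mem_univ j)
  | succ m ih =>
    intro f g hf hg h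
    rw [Fin.prod_univ_succ] at h
    obtain ⟨d, e, hd, he, hde, hfd⟩ := pdc_split_prod l (f 0) g (hf 0) hg (h ▸ dvd_mul_right _ _)
    have h2 : ∏ i : Fin m, f i.succ = ∏ j, e j := by
      apply mul_left_cancel₀ (hf 0).ne_zero
      rw [h, hfd, ← Finset.prod_mul_distrib]
      exact Finset.prod_congr rfl fun j _ => hde j
    obtain ⟨k, hk, hk1, hk2⟩ := ih (fun i => f i.succ) e (fun i => hf _) he h2
    refine ⟨Fin.cons d k, ?_, ?_, ?_⟩
    · intro i; refine Fin.cases ?_ ?_ i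
      · simpa using hd
      · intro i; simpa using hk i
    · intro i; refine Fin.cases ?_ ?_ i
      · simpa using hfd.symm
      · intro i; simpa using hk1 i
    · intro j
      rw [Fin.prod_univ_succ]
      simp [hk2, hde]

open Polynomial in
theorem pdc_inj_aux {F : Type} [Field F] {m l : ℕ} (h h' : Fin m → Fin l → F[X])
    (h1 : ∀ i, ∏ j, h i j = ∏ j, h' i j) (h2 : ∀ j, ∏ i, h i j = ∏ i, h' i j)
    (hs : Squarefree (∏ j, ∏ i, h i j)) (i : Fin m) (j : Fin l) : h i j ∣ h' i j := by
  classical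
  have hd : h i j ∣ h' i j * ∏ k ∈ Finset.univ.erase j, h' i k := by
    rw [Finset.mul_prod_erase _ _ (Finset.mem_univ j), ← h1]
    exact Finset.dvd_prod_of_mem _ (Finset.mem_univ j)
  refine IsCoprime.dvd_of_dvd_mul_right ?_ hd
  refine IsCoprime.prod_right fun k hk => ?_
  have hkj := Finset.ne_of_mem_erase hk
  rw [← Finset.mul_prod_erase _ _ (Finset.mem_univ j), squarefree_mul_iff] at hs
  have hc := hs.1.isCoprime
  refine (hc.of_isCoprime_of_dvd_left ?_).of_isCoprime_of_dvd_right ?_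
  · exact Finset.dvd_prod_of_mem (fun i => h i j) (Finset.mem_univ i)
  · refine dvd_trans ?_ (Finset.dvd_prod_of_mem _ hk)
    rw [h2]
    exact Finset.dvd_prod_of_mem (fun i => h' i k) (Finset.mem_univ i)

open Polynomial in
theorem pdc_inj {F : Type} [Field F] {m l : ℕ} (h h' : Fin m → Fin l → F[X])
    (hm : ∀ i j, (h i j).Monic) (hm' : ∀ i j, (h' i j).Monic)
    (h1 : ∀ i, ∏ j, h i j = ∏ j, h' i j) (h2 : ∀ j, ∏ i, h i j = ∏ i, h' i j)
    (hs : Squarefree (∏ j, ∏ i, h i j)) : h = h' := by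
  funext i j
  refine eq_of_monic_of_associated (hm i j) (hm' i j) (associated_of_dvd_dvd ?_ ?_)
  · exact pdc_inj_aux h h' h1 h2 hs i j
  · refine pdc_inj_aux h' h (fun i => (h1 i).symm) (fun j => (h2 j).symm) ?_ i j
    simpa only [h2] using hs

open Polynomial in
theorem pdc_card_monic (F : Type) [Field F] [Fintype F] (d : ℕ) :
    Nat.card {p : F[X] // p.Monic ∧ p.natDegree = d} = Fintype.card F ^ d := by
  rw [Nat.card_congr ((monicEquivDegreeLT d).trans (degreeLTEquiv F d).toEquiv)]
  simp

open Polynomial in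
theorem pdc_finite_monic (F : Type) [Field F] [Fintype F] (d : ℕ) :
    Finite {p : F[X] // p.Monic ∧ p.natDegree = d} :=
  Finite.of_equiv _ ((monicEquivDegreeLT d).trans (degreeLTEquiv F d).toEquiv).symm

open Polynomial UniqueFactorizationMonoid in
theorem pdc_divisors {F : Type} [Field F] (p : F[X]) (hp : p.Monic) :
    ∃ D : Finset F[X], D.card ≤ 2 ^ p.natDegree ∧ ∀ d, d.Monic → d ∣ p → d ∈ D := by
  classical
  have hmon : ∀ q : F[X], q ≠ 0 → ∀ x ∈ normalizedFactors q, x.Monic := by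
    intro q hq x hx
    rw [← normalize_normalized_factor x hx]
    exact monic_normalize (irreducible_of_normalized_factor x hx).ne_zero
  have hprod : ∀ q : F[X], q.Monic → (normalizedFactors q).prod = q := by
    intro q hq
    refine eq_of_monic_of_associated ?_ hq (prod_normalizedFactors hq.ne_zero)
    have := monic_multiset_prod_of_monic (normalizedFactors q) id (hmon q hq.ne_zero)
    simpa using this
  refine ⟨((normalizedFactors p).powerset.map Multiset.prod).toFinset, ?_, ?_⟩
  · refine (Multiset.toFinset_card_le _).trans ?_
    rw [Multiset.card_map, Multiset.card_powerset]
    refine Nat.pow_le_pow_right (by norm_num) ?_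
    conv_rhs => rw [← hprod p hp]
    rw [natDegree_multiset_prod _ (zero_notMem_normalizedFactors p)]
    have := Multiset.card_nsmul_le_sum (s := (normalizedFactors p).map natDegree) (a := 1) ?_
    · simpa using this
    · intro x hx
      obtain ⟨y, hy, rfl⟩ := Multiset.mem_map.1 hx
      exact (irreducible_of_normalized_factor y hy).natDegree_pos
  · intro d hd hdp
    rw [Multiset.mem_toFinset, Multiset.mem_map]
    exact ⟨normalizedFactors d, Multiset.mem_powerset.2
      ((dvd_iff_normalizedFactors_le_normalizedFactors hd.ne_zero hp.ne_zero).1 hdp), hprod d hd⟩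

open Polynomial in
theorem pdc_nonsqfree (F : Type) [Field F] [Fintype F] (n : ℕ) :
    {p : F[X] | p.Monic ∧ p.natDegree = n ∧ ¬ Squarefree p}.Finite ∧
    {p : F[X] | p.Monic ∧ p.natDegree = n ∧ ¬ Squarefree p}.ncard ≤
      n * Fintype.card F ^ (n - 1) := by
  classical
  have hfin := pdc_finite_monic F
  let X := Σ k : {k : Fin n // 2 * (k.1 + 1) ≤ n},
    {p : F[X] // p.Monic ∧ p.natDegree = k.1.1 + 1} ×
    {p : F[X] // p.Monic ∧ p.natDegree = n - 2 * (k.1.1 + 1)}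
  let φ : X → F[X] := fun x => x.2.1.1 * x.2.1.1 * x.2.2.1
  have hsub : {p : F[X] | p.Monic ∧ p.natDegree = n ∧ ¬ Squarefree p} ⊆ Set.range φ := by
    rintro p ⟨hp, hpn, hsq⟩
    simp only [Squarefree, not_forall] at hsq
    obtain ⟨a, ⟨b, hab⟩, hu⟩ := hsq
    have ha0 : a ≠ 0 := by rintro rfl; simp at hab; exact hp.ne_zero hab
    have hm := monic_normalize ha0
    have hass := (normalize_associated a).symm
    obtain ⟨c, hc⟩ : normalize a * normalize a ∣ p :=
      (hass.mul_mul hass).dvd_iff_dvd_left.1 ⟨b, hab⟩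
    have hcm : c.Monic := Monic.of_mul_monic_left (hm.mul hm) (hc ▸ hp)
    have hdeg : n = (normalize a).natDegree + (normalize a).natDegree + c.natDegree := by
      rw [← hpn, hc, (hm.mul hm).natDegree_mul hcm, hm.natDegree_mul hm]
    have hpos : 0 < (normalize a).natDegree := by
      rw [Nat.pos_iff_ne_zero]
      intro h0
      have := hm.natDegree_eq_zero.1 h0
      exact hu (hass.isUnit_iff.2 (this ▸ isUnit_one))
    refine ⟨⟨⟨⟨(normalize a).natDegree - 1, by omega⟩, by simp only; omega⟩,
      ⟨normalize a, hm, by simp only; omega⟩, ⟨c, hcm, by simp only; omega⟩⟩, hc.symm⟩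
  refine ⟨(Set.finite_range φ).subset hsub, (Set.ncard_le_ncard hsub (Set.finite_range φ)).trans ?_⟩
  rw [← Set.image_univ]
  refine (Set.ncard_image_le Set.finite_univ).trans ?_
  rw [Set.ncard_univ, Nat.card_sigma]
  have hq : 0 < Fintype.card F := Fintype.card_pos
  refine (Finset.sum_le_card_nsmul _ _ (Fintype.card F ^ (n - 1)) ?_).trans ?_
  · rintro ⟨k, hk⟩ -
    rw [Nat.card_prod, pdc_card_monic, pdc_card_monic, ← pow_add]
    exact Nat.pow_le_pow_right hq (by simp only; omega)
  · rw [smul_eq_mul]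
    refine Nat.mul_le_mul_right _ ?_
    rw [Finset.card_univ]
    simpa using Fintype.card_subtype_le (fun k : Fin n => 2 * (k.1 + 1) ≤ n)

open Polynomial in
/-- the matrices of monic polynomials with prescribed row and column degrees -/
def pdcT (F : Type) [Field F] {m l : ℕ} (μ : Fin m → ℕ) (ν : Fin l → ℕ) :
    Set (Fin m → Fin l → F[X]) :=
  {h | (∀ i j, (h i j).Monic) ∧ (∀ i, ∑ j, (h i j).natDegree = μ i) ∧
    (∀ j, ∑ i, (h i j).natDegree = ν j)}

open Polynomial in
/-- sorting by degree matrix -/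
def pdcEquiv (F : Type) [Field F] {m l : ℕ} (μ : Fin m → ℕ) (ν : Fin l → ℕ) :
    pdcT F μ ν ≃ Σ M : {M : Fin m → Fin l → ℕ //
      (∀ i, ∑ j, M i j = μ i) ∧ (∀ j, ∑ i, M i j = ν j)},
      ∀ i j, {p : F[X] // p.Monic ∧ p.natDegree = M.1 i j} where
  toFun h := ⟨⟨fun i j => (h.1 i j).natDegree, h.2.2⟩, fun i j => ⟨h.1 i j, h.2.1 i j, rfl⟩⟩
  invFun x := ⟨fun i j => (x.2 i j).1, fun i j => (x.2 i j).2.1, by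
    simpa only [fun i j => (x.2 i j).2.2] using x.1.2⟩
  left_inv h := rfl
  right_inv := by
    rintro ⟨⟨M, hM⟩, x⟩
    obtain ⟨p, hp⟩ : ∃ p : Fin m → Fin l → F[X], p = fun i j => (x i j).1 := ⟨_, rfl⟩
    have hx : ∀ i j, (p i j).Monic ∧ (p i j).natDegree = M i j := by
      intro i j; rw [hp]; exact (x i j).2
    obtain rfl : x = fun i j => ⟨p i j, hx i j⟩ := by
      funext i j; apply Subtype.ext; simp [hp]
    clear hp
    obtain rfl : (fun i j => (p i j).natDegree) = M := by
      funext i j; exact (hx i j).2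
    rfl

theorem pdc_finite_mat {m l : ℕ} (μ : Fin m → ℕ) (ν : Fin l → ℕ) :
    Finite {M : Fin m → Fin l → ℕ // (∀ i, ∑ j, M i j = μ i) ∧ (∀ j, ∑ i, M i j = ν j)} := by
  refine Set.Finite.to_subtype (s := {M : Fin m → Fin l → ℕ | (∀ i, ∑ j, M i j = μ i) ∧
    (∀ j, ∑ i, M i j = ν j)}) ((Set.finite_Iic (fun i (_ : Fin l) => μ i)).subset ?_)
  rintro M ⟨h1, -⟩ i j
  simp only
  rw [← h1 i]
  exact Finset.single_le_sum (f := fun j => M i j) (fun _ _ => Nat.zero_le _) (Finset.mem_univ j)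

theorem pdc_T_finite (F : Type) [Field F] [Fintype F] {m l : ℕ} (μ : Fin m → ℕ) (ν : Fin l → ℕ) :
    (pdcT F μ ν).Finite := by
  have := pdc_finite_mat μ ν
  have := pdc_finite_monic F
  have : Finite (pdcT F μ ν) := Finite.of_equiv _ (pdcEquiv F μ ν).symm
  exact Set.toFinite _

theorem pdc_T_card (F : Type) [Field F] [Fintype F] {m l : ℕ} (μ : Fin m → ℕ) (ν : Fin l → ℕ) :
    (pdcT F μ ν).ncard = Nmat μ ν * Fintype.card F ^ (∑ i, μ i) := by
  have := pdc_finite_mat μ ν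
  have := pdc_finite_monic F
  have := Fintype.ofFinite {M : Fin m → Fin l → ℕ //
    (∀ i, ∑ j, M i j = μ i) ∧ (∀ j, ∑ i, M i j = ν j)}
  rw [← Nat.card_coe_set_eq, Nat.card_congr (pdcEquiv F μ ν), Nat.card_sigma]
  rw [Finset.sum_congr rfl (g := fun _ => Fintype.card F ^ (∑ i, μ i))]
  · rw [Finset.sum_const, smul_eq_mul, Nmat, Nat.card_eq_fintype_card, Finset.card_univ]
  · rintro ⟨M, hM1, hM2⟩ -
    simp only [Nat.card_pi, pdc_card_monic, Finset.prod_pow_eq_pow_sum, hM1]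

open Polynomial in
theorem pdc_bad (F : Type) [Field F] [Fintype F] {m l : ℕ} (μ : Fin m → ℕ) (ν : Fin l → ℕ)
    (n : ℕ) (hν : ∑ j, ν j = n) :
    {h ∈ pdcT F μ ν | ¬ Squarefree (∏ j, ∏ i, h i j)}.ncard ≤
      ((2 ^ n) ^ l) ^ m * (n * Fintype.card F ^ (n - 1)) := by
  classical
  obtain ⟨hfin, hcard⟩ := pdc_nonsqfree F n
  have hBfin : {h ∈ pdcT F μ ν | ¬ Squarefree (∏ j, ∏ i, h i j)}.Finite :=
    (pdc_T_finite F μ ν).subset fun h hh => hh.1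
  rw [Set.ncard_eq_toFinset_card _ hBfin]
  have hmaps : ∀ h ∈ hBfin.toFinset, (∏ j, ∏ i, h i j) ∈
      {p : F[X] | p.Monic ∧ p.natDegree = n ∧ ¬ Squarefree p} := by
    intro h hh
    obtain ⟨⟨hm, h1, h2⟩, hs⟩ := hBfin.mem_toFinset.1 hh
    have hm2 : ∀ j, (∏ i, h i j).Monic := fun j => monic_prod_of_monic _ _ fun i _ => hm i j
    refine ⟨monic_prod_of_monic _ _ fun j _ => hm2 j, ?_, hs⟩
    rw [natDegree_prod_of_monic _ _ fun j _ => hm2 j, ← hν]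
    refine Finset.sum_congr rfl fun j _ => ?_
    rw [natDegree_prod_of_monic _ _ fun i _ => hm i j, h2]
  refine (Finset.card_le_mul_card_image (f := fun h => ∏ j, ∏ i, h i j) _
    (((2 ^ n) ^ l) ^ m) ?_).trans ?_
  · intro p hp
    obtain ⟨h, hh, rfl⟩ := Finset.mem_image.1 hp
    obtain ⟨hpm, hpn, -⟩ := hmaps h hh
    generalize (∏ j, ∏ i, h i j) = p at *
    obtain ⟨D, hD, hDm⟩ := pdc_divisors p hpm
    rw [hpn] at hD
    have : (hBfin.toFinset.filter fun a => ∏ j, ∏ i, a i j = p) ⊆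
        Fintype.piFinset fun _ : Fin m => Fintype.piFinset fun _ : Fin l => D := by
      intro a ha
      obtain ⟨ha1, ha2⟩ := Finset.mem_filter.1 ha
      simp only [Fintype.mem_piFinset]
      intro i j
      refine hDm _ ((hBfin.mem_toFinset.1 ha1).1.1 i j) ?_
      rw [← ha2]
      exact (Finset.dvd_prod_of_mem (fun i => a i j) (Finset.mem_univ i)).trans
        (Finset.dvd_prod_of_mem (fun j => ∏ i, a i j) (Finset.mem_univ j))
    refine (Finset.card_le_card this).trans ?_
    simp only [Fintype.card_piFinset, Finset.prod_const, Finset.card_univ, Fintype.card_fin]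
    gcongr
  · refine Nat.mul_le_mul_left _ (le_trans ?_ hcard)
    rw [Set.ncard_eq_toFinset_card _ hfin]
    refine Finset.card_le_card ?_
    intro p hp
    obtain ⟨h, hh, rfl⟩ := Finset.mem_image.1 hp
    exact hfin.mem_toFinset.2 (hmaps h hh)

open Polynomial in
theorem pdc_bounds (F : Type) [Field F] [Fintype F] {m l : ℕ} (μ : Fin m → ℕ) (ν : Fin l → ℕ)
    (n : ℕ) (hμ : ∑ i, μ i = n) (hν : ∑ j, ν j = n) (S : ℕ)
    (hS : S = Nat.card {p : (Fin m → Polynomial F) × (Fin l → Polynomial F) //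
          (∀ i, (p.1 i).Monic ∧ (p.1 i).natDegree = μ i) ∧
          (∀ j, (p.2 j).Monic ∧ (p.2 j).natDegree = ν j) ∧
          ∏ i, p.1 i = ∏ j, p.2 j}) :
    S ≤ Nmat μ ν * Fintype.card F ^ n ∧
    Nmat μ ν * Fintype.card F ^ n ≤
      S + ((2 ^ n) ^ l) ^ m * (n * Fintype.card F ^ (n - 1)) := by
  classical
  let A : Set ((Fin m → Polynomial F) × (Fin l → Polynomial F)) := {p |
          (∀ i, (p.1 i).Monic ∧ (p.1 i).natDegree = μ i) ∧
          (∀ j, (p.2 j).Monic ∧ (p.2 j).natDegree = ν j) ∧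
          ∏ i, p.1 i = ∏ j, p.2 j}
  have hSA : S = A.ncard := hS.trans (Nat.card_coe_set_eq A)
  let Φ : (Fin m → Fin l → F[X]) → (Fin m → F[X]) × (Fin l → F[X]) :=
    fun h => (fun i => ∏ j, h i j, fun j => ∏ i, h i j)
  have hT := pdc_T_finite F μ ν
  have himg : Φ '' pdcT F μ ν = A := by
    apply Set.Subset.antisymm
    · rintro _ ⟨h, ⟨hm, h1, h2⟩, rfl⟩
      have e1 : ∀ i, (∏ j, h i j).Monic ∧ (∏ j, h i j).natDegree = μ i := fun i =>
        ⟨monic_prod_of_monic _ _ fun j _ => hm i j, by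
          rw [← h1 i]; exact natDegree_prod_of_monic _ _ fun j _ => hm i j⟩
      have e2 : ∀ j, (∏ i, h i j).Monic ∧ (∏ i, h i j).natDegree = ν j := fun j =>
        ⟨monic_prod_of_monic _ _ fun i _ => hm i j, by
          rw [← h2 j]; exact natDegree_prod_of_monic _ _ fun i _ => hm i j⟩
      have e3 : ∏ i, ∏ j, h i j = ∏ j, ∏ i, h i j := Finset.prod_comm
      exact ⟨e1, e2, e3⟩
    · rintro ⟨f, g⟩ ⟨hf, hg, hfg⟩
      obtain ⟨h, hm, h1, h2⟩ := pdc_refine l m f g (fun i => (hf i).1) (fun j => (hg j).1) hfg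
      refine ⟨h, ⟨hm, fun i => ?_, fun j => ?_⟩, Prod.ext (funext h1) (funext h2)⟩
      · rw [← (hf i).2, ← natDegree_prod_of_monic _ _ fun j _ => hm i j, h1]
      · rw [← (hg j).2, ← natDegree_prod_of_monic _ _ fun i _ => hm i j, h2]
  have hTc := pdc_T_card F μ ν
  rw [hμ] at hTc
  rw [← hTc, hSA, ← himg]
  refine ⟨Set.ncard_image_le hT, ?_⟩
  have hinj : Set.InjOn Φ {h ∈ pdcT F μ ν | Squarefree (∏ j, ∏ i, h i j)} := by
    rintro h ⟨hh, hs⟩ h' ⟨hh', -⟩ heq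
    exact pdc_inj h h' hh.1 hh'.1 (fun i => congrFun (congrArg Prod.fst heq) i)
      (fun j => congrFun (congrArg Prod.snd heq) j) hs
  have hle : {h ∈ pdcT F μ ν | Squarefree (∏ j, ∏ i, h i j)}.ncard ≤
      (Φ '' pdcT F μ ν).ncard := by
    rw [← Set.InjOn.ncard_image hinj]
    exact Set.ncard_le_ncard (Set.image_mono fun h hh => hh.1) (hT.image _)
  have hun : pdcT F μ ν = {h ∈ pdcT F μ ν | Squarefree (∏ j, ∏ i, h i j)} ∪
      {h ∈ pdcT F μ ν | ¬ Squarefree (∏ j, ∏ i, h i j)} := by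
    ext h; simp only [Set.mem_union, Set.mem_setOf_eq]; tauto
  have hb := pdc_bad F μ ν n hν
  have hu := Set.ncard_union_le {h ∈ pdcT F μ ν | Squarefree (∏ j, ∏ i, h i j)}
      {h ∈ pdcT F μ ν | ¬ Squarefree (∏ j, ∏ i, h i j)}
  rw [← hun] at hu
  omega

/-- For partitions `μ, ν ⊢ n`, the number `S(F)` of tuples of monic polynomials
`(f_1,…,f_m,g_1,…,g_l)` over a finite field `F` with `deg f_i = μ_i`, `deg g_j = ν_j` and
`f_1 ⋯ f_m = g_1 ⋯ g_l` satisfies `S(F)/q^n → N_{μ,ν}` as `q = |F| → ∞`. -/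
theorem polynomial_divisor_count_tendsto (n : ℕ) (hn : 1 ≤ n) (m l : ℕ)
    (μ : Fin m → ℕ) (ν : Fin l → ℕ)
    (hμa : Antitone μ) (hμp : ∀ i, 0 < μ i) (hμs : ∑ i, μ i = n)
    (hνa : Antitone ν) (hνp : ∀ j, 0 < ν j) (hνs : ∑ j, ν j = n) :
    ∀ ε : ℝ, 0 < ε → ∃ C : ℕ, ∀ (F : Type) [Field F] [Fintype F],
      C ≤ Fintype.card F →
      |(Nat.card {p : (Fin m → Polynomial F) × (Fin l → Polynomial F) //
          (∀ i, (p.1 i).Monic ∧ (p.1 i).natDegree = μ i) ∧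
          (∀ j, (p.2 j).Monic ∧ (p.2 j).natDegree = ν j) ∧
          ∏ i, p.1 i = ∏ j, p.2 j} : ℝ) / (Fintype.card F : ℝ) ^ n -
        (Nmat μ ν : ℝ)| < ε := by
  intro ε hε
  obtain ⟨C, hC⟩ := exists_nat_gt ((((2 ^ n) ^ l) ^ m * n : ℕ) / ε : ℝ)
  refine ⟨C, ?_⟩
  intro F _ _ hCF
  have hq : (0 : ℝ) < Fintype.card F := by exact_mod_cast Fintype.card_pos
  obtain ⟨hu, hl⟩ := pdc_bounds F μ ν n hμs hνs _ rfl
  generalize Nat.card {p : (Fin m → Polynomial F) × (Fin l → Polynomial F) //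
          (∀ i, (p.1 i).Monic ∧ (p.1 i).natDegree = μ i) ∧
          (∀ j, (p.2 j).Monic ∧ (p.2 j).natDegree = ν j) ∧
          ∏ i, p.1 i = ∏ j, p.2 j} = S at *
  have hCq : (((2 ^ n) ^ l) ^ m * n : ℕ) < ε * (Fintype.card F : ℝ) := by
    rw [div_lt_iff₀ hε] at hC
    have : (C : ℝ) ≤ Fintype.card F := by exact_mod_cast hCF
    nlinarith
  obtain ⟨k, rfl⟩ : ∃ k, n = k + 1 := ⟨n - 1, by omega⟩
  rw [Nat.add_sub_cancel, ← mul_assoc] at hl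
  generalize ((2 ^ (k + 1)) ^ l) ^ m * (k + 1) = K at *
  generalize Nmat μ ν = N at *
  generalize Fintype.card F = q at *
  have hu' : (S : ℝ) ≤ N * (q : ℝ) ^ (k + 1) := by exact_mod_cast hu
  have hl' : (N : ℝ) * (q : ℝ) ^ (k + 1) ≤ S + K * (q : ℝ) ^ k := by exact_mod_cast hl
  have hqk : (0 : ℝ) < (q : ℝ) ^ k := by positivity
  have hqk1 : (0 : ℝ) < (q : ℝ) ^ (k + 1) := by positivity
  have hlt : (K : ℝ) * (q : ℝ) ^ k < ε * (q : ℝ) ^ (k + 1) := by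
    rw [pow_succ]; nlinarith
  rw [abs_lt]
  constructor
  · rw [lt_sub_iff_add_lt, lt_div_iff₀ hqk1]; nlinarith
  · rw [sub_lt_iff_lt_add, div_lt_iff₀ hqk1]; nlinarith
end
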